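/- arXiv:2012.11927 — 2 statements merged into one kernel-verified Lean document; each statement's English description precedes it below -/
import Mathlib

section
/- Let k be a field and P a finite partially ordered set containing an element x that is comparable with every other element of P (for all y ∈ P, x ≤ y or y ≤ x). Let k[P] be the incidence algebra of P over k. Then the trivial extension algebra T(k[P]) is periodic if and only if it is twisted periodic. -/
open TensorProduct

/-- There is an exact sequence `0 → M → P_n → ⋯ → P_1 → N → 0` of `R`-modules
(so with `n` middle terms) in which each middle term `P_i` is projective. -/
def HasProjExactSeq (R : Type) [Ring R] (M N : ModuleCat R) (n : ℕ) : Prop :=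
  ∃ (P : ℕ → ModuleCat R) (d : ∀ i, P (i + 1) →ₗ[R] P i)
    (_ : (P 0 : Type) ≃ₗ[R] N) (_ : (M : Type) ≃ₗ[R] P (n + 1)),
    (∀ i, 1 ≤ i → i ≤ n → Module.Projective R (P i)) ∧
    Function.Surjective (d 0) ∧ Function.Injective (d n) ∧
    ∀ i < n, LinearMap.range (d (i + 1)) = LinearMap.ker (d i)

/-- The regular bimodule `B` as a module over the enveloping algebra `B ⊗[k] Bᵐᵒᵖ`. -/
noncomputable def regularBimodule (k B : Type) [Field k] [Ring B] [Algebra k B] :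
    ModuleCat (B ⊗[k] Bᵐᵒᵖ) :=
  letI : Module (B ⊗[k] Bᵐᵒᵖ) B := TensorProduct.Algebra.module
  ModuleCat.of _ B

/-- The twisted bimodule `₁B_φ` (underlying set `B`, right action twisted by `φ`,
i.e. `a • x • b = a * x * φ b`) as a module over the enveloping algebra `B ⊗[k] Bᵐᵒᵖ`. -/
noncomputable def twistedBimodule (k B : Type) [Field k] [Ring B] [Algebra k B]
    (φ : B ≃ₐ[k] B) : ModuleCat (B ⊗[k] Bᵐᵒᵖ) :=
  letI : Module (B ⊗[k] Bᵐᵒᵖ) B := TensorProduct.Algebra.module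
  letI : Module (B ⊗[k] Bᵐᵒᵖ) B :=
    Module.compHom B
      (Algebra.TensorProduct.map (AlgHom.id k B) (AlgEquiv.op φ).toAlgHom).toRingHom
  ModuleCat.of _ B

/-- A finite-dimensional `k`-algebra `B` is periodic if there are `n ≥ 1` and an exact
sequence `0 → B → P_{n-1} → ⋯ → P_0 → B → 0` of `B`-`B`-bimodules (modules over the
enveloping algebra `B ⊗[k] Bᵐᵒᵖ`) with all `P_i` projective. -/
noncomputable def IsPeriodicAlgebra (k B : Type) [Field k] [Ring B] [Algebra k B] : Prop :=
  ∃ n : ℕ, 1 ≤ n ∧ HasProjExactSeq (B ⊗[k] Bᵐᵒᵖ) (regularBimodule k B) (regularBimodule k B) n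

/-- A finite-dimensional `k`-algebra `B` is twisted periodic if there are `n ≥ 1`, an algebra
automorphism `φ` of `B`, and an exact sequence `0 → ₁B_φ → P_{n-1} → ⋯ → P_0 → B → 0` of
bimodules with all `P_i` projective over `B ⊗[k] Bᵐᵒᵖ`. -/
noncomputable def IsTwistedPeriodicAlgebra (k B : Type) [Field k] [Ring B] [Algebra k B] : Prop :=
  ∃ (n : ℕ) (φ : B ≃ₐ[k] B), 1 ≤ n ∧
    HasProjExactSeq (B ⊗[k] Bᵐᵒᵖ) (twistedBimodule k B φ) (regularBimodule k B) n

section DualBimodule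

variable (k A : Type) [Field k] [Ring A] [Algebra k A]

/-- The left `A`-action on `D(A) = Hom_k(A, k)`, given by `(a • f) x = f (x * a)`. -/
noncomputable instance Module.Dual.leftModule : Module A (Module.Dual k A) where
  smul a f := f ∘ₗ LinearMap.mulRight k a
  one_smul f := LinearMap.ext fun x => by show f (x * 1) = f x; rw [mul_one]
  mul_smul a b f := LinearMap.ext fun x => by
    show f (x * (a * b)) = f (x * a * b); rw [mul_assoc]
  smul_zero a := LinearMap.ext fun x => by show (0 : Module.Dual k A) (x * a) = 0; rfl
  smul_add a f g := LinearMap.ext fun x => by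
    show (f + g) (x * a) = f (x * a) + g (x * a); rfl
  add_smul a b f := LinearMap.ext fun x => by
    show f (x * (a + b)) = f (x * a) + f (x * b); rw [mul_add, map_add]
  zero_smul f := LinearMap.ext fun x => by show f (x * 0) = 0; rw [mul_zero, map_zero]

/-- The right `A`-action on `D(A) = Hom_k(A, k)`, given by `(f • op b) x = f (b * x)`. -/
noncomputable instance Module.Dual.rightModule : Module Aᵐᵒᵖ (Module.Dual k A) where
  smul b f := f ∘ₗ LinearMap.mulLeft k b.unop
  one_smul f := LinearMap.ext fun x => by show f (1 * x) = f x; rw [one_mul]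
  mul_smul a b f := LinearMap.ext fun x => by
    show f ((a * b).unop * x) = f (b.unop * (a.unop * x))
    rw [MulOpposite.unop_mul, mul_assoc]
  smul_zero a := LinearMap.ext fun x => by show (0 : Module.Dual k A) (a.unop * x) = 0; rfl
  smul_add a f g := LinearMap.ext fun x => by
    show (f + g) (a.unop * x) = f (a.unop * x) + g (a.unop * x); rfl
  add_smul a b f := LinearMap.ext fun x => by
    show f ((a + b).unop * x) = f (a.unop * x) + f (b.unop * x)
    rw [MulOpposite.unop_add, add_mul, map_add]
  zero_smul f := LinearMap.ext fun x => by
    show f ((0 : Aᵐᵒᵖ).unop * x) = 0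
    rw [MulOpposite.unop_zero, zero_mul, map_zero]

instance : SMulCommClass A Aᵐᵒᵖ (Module.Dual k A) where
  smul_comm a b f := LinearMap.ext fun x => by
    show f (b.unop * (x * a)) = f (b.unop * x * a); rw [mul_assoc]

instance : IsScalarTower k A (Module.Dual k A) where
  smul_assoc c a f := LinearMap.ext fun x => by
    show f (x * (c • a)) = c • f (x * a)
    rw [mul_smul_comm, map_smul]

instance : IsScalarTower k Aᵐᵒᵖ (Module.Dual k A) where
  smul_assoc c b f := LinearMap.ext fun x => by
    show f ((c • b).unop * x) = c • f (b.unop * x)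
    rw [MulOpposite.unop_smul, smul_mul_assoc, map_smul]

/-- The trivial extension algebra `T(A) = A ⊕ D(A)`. -/
noncomputable abbrev TrivialExtension : Type := TrivSqZeroExt A (Module.Dual k A)


end DualBimodule

/-!
Suppose that `0 → B_φ → P_{n-1} → ⋯ → P_0 → B → 0` is exact, where `B = T(k[P])`. Right
multiplication by a nilpotent element `r` has Hattori–Stallings trace zero on a projective bimodule,
so its traces on consecutive syzygies of `B` differ by a sign and `φ r ≡ (-1)ⁿ r` modulo `[B, B]`.

Splicing twisted copies of the sequence replaces `φ` by its powers, so it suffices that some power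
of `φ` is inner. The algebra `B` has finitely many characters, one for each element of `P`, and a
power of `φ` fixes them all; up to an inner automorphism it then fixes the diagonal idempotents. It
multiplies the matrix units of `k[P]` by the values of a `kˣ`-valued cocycle on `P`. An element
comparable with all others makes this cocycle a coboundary, so that conjugation by a diagonal unit
removes it. The action on `D(k[P])` is finally determined by the form `(a, f) ↦ f 1`, which kills
`[B, B]`, and which by the first paragraph every even power of `φ` preserves on `D(k[P])`.
-/

/-! ### Syzygies and exact sequences -/

/-- `K` is a syzygy of `N`: there is a short exact sequence `0 → K → Q → N → 0` with `Q`
projective. -/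
def IsSyzygy.{v} (R : Type*) [Ring R] (K N : Type v) [AddCommGroup K] [Module R K]
    [AddCommGroup N] [Module R N] : Prop :=
  ∃ (Q : ModuleCat.{v} R) (i : K →ₗ[R] Q) (p : Q →ₗ[R] N), Module.Projective R Q ∧
    Function.Injective i ∧ Function.Surjective p ∧ LinearMap.range i = LinearMap.ker p

theorem projective_restrictScalars_of_ringEquiv {R S : Type*} [Ring R] [Ring S] (σ : R ≃+* S)
    (M : ModuleCat S) [Module.Projective S M] :
    Module.Projective R ((ModuleCat.restrictScalars (σ : R →+* S)).obj M) := by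
  have : RingHomInvPair (σ : R →+* S) (σ.symm : S →+* R) := .of_ringEquiv σ
  have : RingHomInvPair (σ.symm : S →+* R) (σ : R →+* S) := .symm _ _
  let e : M ≃ₛₗ[(σ.symm : S →+* R)] (ModuleCat.restrictScalars (σ : R →+* S)).obj M :=
    { AddEquiv.refl M with
      map_smul' := fun r x ↦ congrArg (· • x) (σ.apply_symm_apply r).symm }
  exact Module.Projective.of_equiv e

namespace HasProjExactSeq

variable {R : Type} [Ring R] {L M M' N N' : ModuleCat.{0} R} {m n : ℕ}

theorem congr_left (h : HasProjExactSeq R M N n) (e : M' ≃ₗ[R] M) :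
    HasProjExactSeq R M' N n :=
  let ⟨P, d, eN, eM, h⟩ := h
  ⟨P, d, eN, e.trans eM, h⟩

theorem congr_right (h : HasProjExactSeq R M N n) (e : N ≃ₗ[R] N') :
    HasProjExactSeq R M N' n :=
  let ⟨P, d, eN, eM, h⟩ := h
  ⟨P, d, eN.trans e, eM, h⟩

theorem zero_iff : HasProjExactSeq R M N 0 ↔ Nonempty (M ≃ₗ[R] N) := by
  constructor
  · rintro ⟨P, d, eN, eM, -, hsurj, hinj, -⟩
    exact ⟨(eM.trans (LinearEquiv.ofBijective (d 0) ⟨hinj, hsurj⟩)).trans eN⟩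
  · rintro ⟨e⟩
    exact ⟨fun _ ↦ N, fun _ ↦ LinearMap.id, LinearEquiv.refl R N, e, fun i _ _ ↦ by omega,
      Function.surjective_id, Function.injective_id, fun i hi ↦ by omega⟩

theorem exists_isSyzygy (h : HasProjExactSeq R M N (n + 1)) :
    ∃ K : ModuleCat.{0} R, IsSyzygy R K N ∧ HasProjExactSeq R M K n := by
  obtain ⟨P, d, eN, eM, hP, hsurj, hinj, hexact⟩ := h
  have hd : ∀ x, d 1 x ∈ LinearMap.ker (d 0) := fun x ↦ hexact 0 (by omega) ▸ ⟨x, rfl⟩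
  refine ⟨ModuleCat.of R (LinearMap.ker (d 0)), ⟨P 1, Submodule.subtype _, eN ∘ₗ d 0,
      hP 1 le_rfl (by omega), Submodule.injective_subtype _, eN.surjective.comp hsurj, ?_⟩,
    ⟨fun | 0 => ModuleCat.of R (LinearMap.ker (d 0)) | i + 1 => P (i + 2),
      fun | 0 => (d 1).codRestrict _ hd | i + 1 => d (i + 2),
      LinearEquiv.refl R _, eM, ?_, ?_, ?_, ?_⟩⟩
  · rw [Submodule.range_subtype, LinearEquiv.ker_comp]
  · rintro (_ | i) hi hin
    · omega
    · exact hP (i + 2) (by omega) (by omega)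
  · rintro ⟨y, hy⟩
    rw [← hexact 0 (by omega)] at hy
    obtain ⟨x, rfl⟩ := hy
    exact ⟨x, rfl⟩
  · cases n with
    | zero => exact fun x y hxy ↦ hinj (congrArg Subtype.val hxy)
    | succ n => exact hinj
  · rintro (_ | i) hin
    · exact (hexact 1 (by omega)).trans (LinearMap.ker_codRestrict _ _ hd).symm
    · exact hexact (i + 2) (by omega)

theorem of_isSyzygy {K : ModuleCat.{0} R} (hK : IsSyzygy R K N) (h : HasProjExactSeq R M K n) :
    HasProjExactSeq R M N (n + 1) := by
  obtain ⟨Q, i, p, hQ, hi, hp, hip⟩ := hK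
  obtain ⟨P, d, eK, eM, hP, hsurj, hinj, hexact⟩ := h
  have hie : Function.Injective (i ∘ₗ eK.toLinearMap) := hi.comp eK.injective
  refine ⟨fun | 0 => N | 1 => Q | j + 2 => P (j + 1),
    fun | 0 => p | 1 => (i ∘ₗ eK.toLinearMap) ∘ₗ d 0 | j + 2 => d (j + 1),
    LinearEquiv.refl R N, eM, ?_, hp, ?_, ?_⟩
  · rintro (_ | _ | j) hj hjn
    · omega
    · exact hQ
    · exact hP (j + 1) (by omega) (by omega)
  · cases n with
    | zero => exact hie.comp hinj
    | succ n => exact hinj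
  · rintro (_ | _ | j) hjn
    · exact (LinearMap.range_comp_of_range_eq_top _ (LinearMap.range_eq_top.2 hsurj)).trans
        ((LinearMap.range_comp_of_range_eq_top _ eK.range).trans hip)
    · exact (hexact 0 (by omega)).trans
        (LinearMap.ker_comp_of_ker_eq_bot _ (LinearMap.ker_eq_bot.2 hie)).symm
    · exact hexact (j + 1) (by omega)

theorem trans (hLM : HasProjExactSeq R L M m) (hMN : HasProjExactSeq R M N n) :
    HasProjExactSeq R L N (m + n) := by
  induction n generalizing N with
  | zero => exact hLM.congr_right (zero_iff.1 hMN).some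
  | succ n ih =>
    obtain ⟨K, hK, hMK⟩ := hMN.exists_isSyzygy
    exact of_isSyzygy hK (ih hMK)

theorem restrictScalars (h : HasProjExactSeq R M N n) (σ : R ≃+* R) :
    HasProjExactSeq R ((ModuleCat.restrictScalars (σ : R →+* R)).obj M)
      ((ModuleCat.restrictScalars (σ : R →+* R)).obj N) n := by
  obtain ⟨P, d, eN, eM, hP, hsurj, hinj, hexact⟩ := h
  let F := ModuleCat.restrictScalars (σ : R →+* R)
  refine ⟨fun i ↦ F.obj (P i), fun i ↦ (F.map (ModuleCat.ofHom (d i))).hom,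
    (F.mapIso eN.toModuleIso).toLinearEquiv, (F.mapIso eM.toModuleIso).toLinearEquiv,
    fun i hi hin ↦ ?_, hsurj, hinj, fun i hi ↦ ?_⟩
  · have := hP i hi hin
    exact projective_restrictScalars_of_ringEquiv σ (P i)
  · ext x
    exact SetLike.ext_iff.1 (hexact i hi) x

end HasProjExactSeq

/-! ### Stable isomorphism -/

/-- The linear map `f` factors through a projective module, i.e. it vanishes in the stable
module category. -/
def FactorsThroughProjective.{v} {R : Type*} [Ring R] {M N : Type v} [AddCommGroup M] [Module R M]
    [AddCommGroup N] [Module R N] (f : M →ₗ[R] N) : Prop :=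
  ∃ (Q : ModuleCat.{v} R) (α : M →ₗ[R] Q) (β : Q →ₗ[R] N), Module.Projective R Q ∧ f = β ∘ₗ α

/-- `M` and `N` are isomorphic in the stable module category: they are mutually inverse up to
maps that factor through projective modules. -/
def StablyIso.{v} (R : Type*) [Ring R] (M N : Type v) [AddCommGroup M] [Module R M]
    [AddCommGroup N] [Module R N] : Prop :=
  ∃ (u : M →ₗ[R] N) (v : N →ₗ[R] M), FactorsThroughProjective (v ∘ₗ u - LinearMap.id) ∧
    FactorsThroughProjective (u ∘ₗ v - LinearMap.id)

theorem exists_comp_eq_of_range_le {R K Q X : Type*} [Ring R] [AddCommGroup K] [Module R K]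
    [AddCommGroup Q] [Module R Q] [AddCommGroup X] [Module R X] {i : K →ₗ[R] Q}
    (hi : Function.Injective i) {g : X →ₗ[R] Q} (hg : LinearMap.range g ≤ LinearMap.range i) :
    ∃ w : X →ₗ[R] K, i ∘ₗ w = g := by
  refine ⟨(LinearEquiv.ofInjective i hi).symm ∘ₗ g.codRestrict _ fun x ↦ hg ⟨x, rfl⟩, ?_⟩
  ext x
  exact congrArg Subtype.val ((LinearEquiv.ofInjective i hi).apply_symm_apply _)

section Stable

universe v

variable {R : Type*} [Ring R] {M N K Q K' N' Q' : Type v}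
  [AddCommGroup M] [Module R M] [AddCommGroup N] [Module R N] [AddCommGroup K] [Module R K]
  [AddCommGroup Q] [Module R Q] [AddCommGroup K'] [Module R K'] [AddCommGroup N'] [Module R N']
  [AddCommGroup Q'] [Module R Q']

theorem factorsThroughProjective_zero : FactorsThroughProjective (0 : M →ₗ[R] N) :=
  ⟨ModuleCat.of R PUnit, 0, 0, inferInstance, by simp⟩

theorem StablyIso.of_linearEquiv (e : M ≃ₗ[R] N) : StablyIso R M N :=
  ⟨e, e.symm, by simpa using factorsThroughProjective_zero,
    by simpa using factorsThroughProjective_zero⟩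

theorem StablyIso.congr_left {M' : Type v} [AddCommGroup M'] [Module R M'] (h : StablyIso R M N)
    (e : M' ≃ₗ[R] M) : StablyIso R M' N := by
  obtain ⟨u, v, ⟨Q, α, β, hQ, hvu⟩, huv⟩ := h
  refine ⟨u ∘ₗ e, e.symm ∘ₗ v, ⟨Q, α ∘ₗ e, e.symm ∘ₗ β, hQ, LinearMap.ext fun x ↦ ?_⟩, ?_⟩
  · have hx : v (u (e x)) - e x = β (α (e x)) := LinearMap.congr_fun hvu (e x)
    simp [← hx]
  · convert huv using 2
    ext x
    simp

variable {i : K →ₗ[R] Q} {p : Q →ₗ[R] N} {i' : K' →ₗ[R] Q'} {p' : Q' →ₗ[R] N'}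

theorem exists_syzygy_map [Module.Projective R Q] (hip : LinearMap.range i = LinearMap.ker p)
    (hi' : Function.Injective i') (hp' : Function.Surjective p')
    (hip' : LinearMap.range i' = LinearMap.ker p') (g : N →ₗ[R] N') :
    ∃ (G : Q →ₗ[R] Q') (w : K →ₗ[R] K'), p' ∘ₗ G = g ∘ₗ p ∧ i' ∘ₗ w = G ∘ₗ i := by
  obtain ⟨G, hG⟩ := Module.projective_lifting_property p' (g ∘ₗ p) hp'
  have hGi : LinearMap.range (G ∘ₗ i) ≤ LinearMap.range i' := by
    rw [hip', LinearMap.range_le_ker_iff, ← LinearMap.comp_assoc, hG, LinearMap.comp_assoc,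
      LinearMap.range_le_ker_iff.1 hip.le, LinearMap.comp_zero]
  obtain ⟨w, hw⟩ := exists_comp_eq_of_range_le hi' hGi
  exact ⟨G, w, hG, hw⟩

/-- If `g = β ∘ α` and `b` lifts `β` along `p'`, then `G - b ∘ α ∘ p` has values in `K'` and
extends `w` along `i`. -/
theorem FactorsThroughProjective.syzygy_map [Module.Projective R Q]
    (hip : LinearMap.range i = LinearMap.ker p) (hi' : Function.Injective i')
    (hp' : Function.Surjective p') (hip' : LinearMap.range i' = LinearMap.ker p')
    {g : N →ₗ[R] N'} (hg : FactorsThroughProjective g) {G : Q →ₗ[R] Q'} {w : K →ₗ[R] K'}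
    (hG : p' ∘ₗ G = g ∘ₗ p) (hw : i' ∘ₗ w = G ∘ₗ i) : FactorsThroughProjective w := by
  obtain ⟨A, α, β, hA, rfl⟩ := hg
  obtain ⟨b, hb⟩ := Module.projective_lifting_property p' β hp'
  have hrange : LinearMap.range (G - b ∘ₗ α ∘ₗ p) ≤ LinearMap.range i' := by
    rw [hip', LinearMap.range_le_ker_iff, LinearMap.comp_sub, hG, ← LinearMap.comp_assoc _ b, hb,
      LinearMap.comp_assoc, sub_self]
  obtain ⟨s, hs⟩ := exists_comp_eq_of_range_le hi' hrange
  refine ⟨ModuleCat.of R Q, i, s, ‹_›, LinearMap.ext fun x ↦ hi' ?_⟩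
  have hpi : p (i x) = 0 := LinearMap.congr_fun (LinearMap.range_le_ker_iff.1 hip.le) x
  calc i' (w x) = G (i x) := LinearMap.congr_fun hw x
    _ = (G - b ∘ₗ α ∘ₗ p) (i x) := by simp [hpi]
    _ = i' (s (i x)) := (LinearMap.congr_fun hs (i x)).symm

theorem comp_sub_id_of_comp_eq {a : Q →ₗ[R] Q'} {a' : Q' →ₗ[R] Q} {b : N →ₗ[R] N'}
    {b' : N' →ₗ[R] N} (h : p' ∘ₗ a = b ∘ₗ p) (h' : p ∘ₗ a' = b' ∘ₗ p') :
    p ∘ₗ (a' ∘ₗ a - LinearMap.id) = (b' ∘ₗ b - LinearMap.id) ∘ₗ p := by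
  rw [LinearMap.comp_sub, LinearMap.sub_comp, ← LinearMap.comp_assoc, h', LinearMap.comp_assoc, h,
    LinearMap.comp_assoc, LinearMap.comp_id, LinearMap.id_comp]

theorem IsSyzygy.stablyIso (hK : IsSyzygy R K N) (hK' : IsSyzygy R K' N')
    (h : StablyIso R N N') : StablyIso R K K' := by
  obtain ⟨Q, i, p, hQ, hi, hp, hip⟩ := hK
  obtain ⟨Q', i', p', hQ', hi', hp', hip'⟩ := hK'
  obtain ⟨u, v, hvu, huv⟩ := h
  obtain ⟨U, u', hU, hu'⟩ := exists_syzygy_map hip hi' hp' hip' u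
  obtain ⟨V, v', hV, hv'⟩ := exists_syzygy_map hip' hi hp hip v
  exact ⟨u', v',
    hvu.syzygy_map hip hi hp hip (comp_sub_id_of_comp_eq hU hV) (comp_sub_id_of_comp_eq hu' hv'),
    huv.syzygy_map hip' hi' hp' hip' (comp_sub_id_of_comp_eq hV hU)
      (comp_sub_id_of_comp_eq hv' hu')⟩

end Stable

/-! ### The Hattori–Stallings trace -/

/-- The additive subgroup `[R, R]` of `R` generated by the commutators. -/
def commutatorAddSubgroup (R : Type*) [Ring R] : AddSubgroup R :=
  AddSubgroup.closure (Set.range fun x : R × R ↦ x.1 * x.2 - x.2 * x.1)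

/-- The vectors `m i` and functionals `c i` form a (generally redundant) coordinate system
of `M`, as in the dual basis lemma for finitely generated projective modules. -/
def IsCoordinateSystem {R M ι : Type*} [Ring R] [AddCommGroup M] [Module R M] [Fintype ι]
    (m : ι → M) (c : ι → M →ₗ[R] R) : Prop :=
  ∀ x, ∑ i, c i x • m i = x

section HattoriStallings

variable {R : Type*} [Ring R]

theorem mk_mul_comm (x y : R) :
    (QuotientAddGroup.mk (x * y) : R ⧸ commutatorAddSubgroup R) = QuotientAddGroup.mk (y * x) :=
  QuotientAddGroup.eq_iff_sub_mem.2 (AddSubgroup.subset_closure ⟨(x, y), rfl⟩)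

theorem map_eq_zero_of_mem_commutatorAddSubgroup {G : Type*} [AddCommGroup G] {t : R →+ G}
    (ht : ∀ x y, t (x * y) = t (y * x)) {z : R} (hz : z ∈ commutatorAddSubgroup R) : t z = 0 := by
  suffices commutatorAddSubgroup R ≤ t.ker from this hz
  refine (AddSubgroup.closure_le _).2 ?_
  rintro _ ⟨⟨x, y⟩, rfl⟩
  simp [AddMonoidHom.mem_ker, ht x y]

variable {M N : Type*} [AddCommGroup M] [Module R M] [AddCommGroup N] [Module R N]

theorem exists_isCoordinateSystem [Module.Finite R M] [Module.Projective R M] :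
    ∃ (n : ℕ) (m : Fin n → M) (c : Fin n → M →ₗ[R] R), IsCoordinateSystem m c := by
  obtain ⟨n, f, g, -, -, hfg⟩ := Module.Finite.exists_comp_eq_id_of_projective R M
  refine ⟨n, fun i ↦ f (Pi.single i 1), fun i ↦ LinearMap.proj i ∘ₗ g, fun x ↦ ?_⟩
  calc ∑ i, g x i • f (Pi.single i 1) = f (∑ i, Pi.single i (g x i)) := by
        simp only [map_sum, ← map_smul, ← Pi.single_smul, smul_eq_mul, mul_one]
    _ = x := by rw [Finset.univ_sum_single]; exact LinearMap.congr_fun hfg x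

theorem isCoordinateSystem_linearEquiv (e : M ≃ₗ[R] R) :
    IsCoordinateSystem (fun _ : Unit ↦ e.symm 1) fun _ ↦ e.toLinearMap := fun x ↦ by
  simp [← map_smul]

theorem isCoordinateSystem_basis {ι : Type*} [Fintype ι] (b : Module.Basis ι R M) :
    IsCoordinateSystem b b.coord :=
  b.sum_repr

/-- Both sides are `∑ i j, d j (f (m i)) * c i (g (n j))`, with the factors in either order. -/
theorem IsCoordinateSystem.sum_mk_comp_comm {ι κ : Type*} [Fintype ι] [Fintype κ]
    {m : ι → M} {c : ι → M →ₗ[R] R} (hm : IsCoordinateSystem m c)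
    {n : κ → N} {d : κ → N →ₗ[R] R} (hn : IsCoordinateSystem n d)
    (f : M →ₗ[R] N) (g : N →ₗ[R] M) :
    ∑ i, (QuotientAddGroup.mk (c i (g (f (m i)))) : R ⧸ commutatorAddSubgroup R) =
      ∑ j, QuotientAddGroup.mk (d j (f (g (n j)))) := by
  have hleft i : c i (g (f (m i))) = ∑ j, d j (f (m i)) * c i (g (n j)) := by
    conv_lhs => rw [← hn (f (m i))]
    simp only [map_sum, map_smul, smul_eq_mul]
  have hright j : d j (f (g (n j))) = ∑ i, c i (g (n j)) * d j (f (m i)) := by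
    conv_lhs => rw [← hm (g (n j))]
    simp only [map_sum, map_smul, smul_eq_mul]
  simp only [hleft, hright, QuotientAddGroup.mk_sum]
  rw [Finset.sum_comm]
  exact Finset.sum_congr rfl fun j _ ↦ Finset.sum_congr rfl fun i _ ↦ mk_mul_comm _ _

/-- The Hattori–Stallings trace of an endomorphism of a finitely generated projective module,
with values in `R ⧸ [R, R]`. It is computed in a chosen coordinate system; see
`hattoriStallingsTrace_eq_sum` for the independence of this choice. -/
noncomputable def hattoriStallingsTrace (R M : Type*) [Ring R] [AddCommGroup M] [Module R M]
    [Module.Finite R M] [Module.Projective R M] :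
    (M →ₗ[R] M) →+ R ⧸ commutatorAddSubgroup R :=
  let m := (exists_isCoordinateSystem (R := R) (M := M)).choose_spec.choose
  let c := (exists_isCoordinateSystem (R := R) (M := M)).choose_spec.choose_spec.choose
  { toFun := fun f ↦ ∑ i, QuotientAddGroup.mk (c i (f (m i)))
    map_zero' := by simp
    map_add' := by simp [Finset.sum_add_distrib] }

variable [Module.Finite R M] [Module.Projective R M] [Module.Finite R N] [Module.Projective R N]

theorem hattoriStallingsTrace_eq_sum {ι : Type*} [Fintype ι] {m : ι → M} {c : ι → M →ₗ[R] R}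
    (hm : IsCoordinateSystem m c) (f : M →ₗ[R] M) :
    hattoriStallingsTrace R M f = ∑ i, QuotientAddGroup.mk (c i (f (m i))) :=
  (exists_isCoordinateSystem (R := R)).choose_spec.choose_spec.choose_spec.sum_mk_comp_comm hm
    f LinearMap.id

theorem hattoriStallingsTrace_comp_comm (f : M →ₗ[R] N) (g : N →ₗ[R] M) :
    hattoriStallingsTrace R M (g ∘ₗ f) = hattoriStallingsTrace R N (f ∘ₗ g) := by
  obtain ⟨_, m, c, hm⟩ := exists_isCoordinateSystem (R := R) (M := M)
  obtain ⟨_, n, d, hn⟩ := exists_isCoordinateSystem (R := R) (M := N)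
  rw [hattoriStallingsTrace_eq_sum hm, hattoriStallingsTrace_eq_sum hn]
  exact hm.sum_mk_comp_comm hn f g

theorem hattoriStallingsTrace_eq_mk (e : M ≃ₗ[R] R) (f : M →ₗ[R] M) :
    hattoriStallingsTrace R M f = QuotientAddGroup.mk (e (f (e.symm 1))) := by
  simpa using hattoriStallingsTrace_eq_sum (isCoordinateSystem_linearEquiv e) f

end HattoriStallings

section ShortExact

variable {R K G M : Type*} [Ring R] [AddCommGroup K] [Module R K] [AddCommGroup G] [Module R G]
  [AddCommGroup M] [Module R M] {i : K →ₗ[R] G} {p : G →ₗ[R] M}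

theorem exists_splitting [Module.Projective R M] (hi : Function.Injective i)
    (hp : Function.Surjective p) (hip : LinearMap.range i = LinearMap.ker p) :
    ∃ (r : G →ₗ[R] K) (s : M →ₗ[R] G), r ∘ₗ i = LinearMap.id ∧ p ∘ₗ s = LinearMap.id ∧
      i ∘ₗ r + s ∘ₗ p = LinearMap.id := by
  obtain ⟨s, hs⟩ := Module.projective_lifting_property p LinearMap.id hp
  have hrange : LinearMap.range (LinearMap.id - s ∘ₗ p) ≤ LinearMap.range i := by
    rw [hip, LinearMap.range_le_ker_iff, LinearMap.comp_sub, ← LinearMap.comp_assoc, hs]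
    exact sub_self _
  obtain ⟨r, hr⟩ := exists_comp_eq_of_range_le hi hrange
  refine ⟨r, s, LinearMap.ext fun x ↦ hi ?_, hs, by rw [hr, sub_add_cancel]⟩
  have hpi : p (i x) = 0 := LinearMap.congr_fun (LinearMap.range_le_ker_iff.1 hip.le) x
  simpa [hpi] using LinearMap.congr_fun hr (i x)

theorem hattoriStallingsTrace_add_of_exact [Module.Finite R K] [Module.Projective R K]
    [Module.Finite R G] [Module.Projective R G] [Module.Finite R M] [Module.Projective R M]
    (hi : Function.Injective i) (hp : Function.Surjective p)
    (hip : LinearMap.range i = LinearMap.ker p) {a : K →ₗ[R] K} {b : G →ₗ[R] G} {c : M →ₗ[R] M}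
    (hab : i ∘ₗ a = b ∘ₗ i) (hbc : p ∘ₗ b = c ∘ₗ p) :
    hattoriStallingsTrace R K a + hattoriStallingsTrace R M c = hattoriStallingsTrace R G b := by
  obtain ⟨r, s, hri, hps, hid⟩ := exists_splitting hi hp hip
  have ha : hattoriStallingsTrace R G (b ∘ₗ i ∘ₗ r) = hattoriStallingsTrace R K a := by
    rw [← LinearMap.comp_assoc, ← hab, LinearMap.comp_assoc, hattoriStallingsTrace_comp_comm,
      LinearMap.comp_assoc, hri, LinearMap.comp_id]
  have hc : hattoriStallingsTrace R G (b ∘ₗ s ∘ₗ p) = hattoriStallingsTrace R M c := by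
    rw [← LinearMap.comp_assoc, hattoriStallingsTrace_comp_comm, ← LinearMap.comp_assoc, hbc,
      LinearMap.comp_assoc, hps, LinearMap.comp_id]
  rw [← ha, ← hc, ← map_add, ← LinearMap.comp_add, hid, LinearMap.comp_id]

end ShortExact

/-! ### Traces on modules over `B ⊗ C` -/

section TensorAction

variable (k : Type*) {B C M N : Type*} [Field k] [Ring B] [Algebra k B] [Ring C] [Algebra k C]
  [AddCommGroup M] [Module B M] [Module (B ⊗[k] C) M] [IsScalarTower B (B ⊗[k] C) M]
  [AddCommGroup N] [Module B N] [Module (B ⊗[k] C) N] [IsScalarTower B (B ⊗[k] C) N]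

/-- The action of `c : C` on a module over `B ⊗ C`, as a `B`-linear map. For `C = Bᵐᵒᵖ` this is
right multiplication on a bimodule. -/
noncomputable def rightAction (B M : Type*) [Ring B] [Algebra k B] [AddCommGroup M] [Module B M]
    [Module (B ⊗[k] C) M] [IsScalarTower B (B ⊗[k] C) M] (c : C) : M →ₗ[B] M where
  toFun x := ((1 : B) ⊗ₜ[k] c) • x
  map_add' := smul_add _
  map_smul' b x := by
    rw [RingHom.id_apply, ← one_smul (B ⊗[k] C) x, ← smul_assoc b, ← smul_assoc b, smul_smul,
      one_smul, Algebra.TensorProduct.one_def, smul_tmul', smul_tmul',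
      Algebra.TensorProduct.tmul_mul_tmul]
    simp

theorem rightAction_comm (c : C) (f : M →ₗ[B ⊗[k] C] N) :
    f.restrictScalars B ∘ₗ rightAction k B M c = rightAction k B N c ∘ₗ f.restrictScalars B :=
  LinearMap.ext fun x ↦ f.map_smul ((1 : B) ⊗ₜ[k] c) x

section Cyclic

variable [Module.Finite B M] [Module.Projective B M] [Module.Finite B N] [Module.Projective B N]

theorem trace_comp_rightAction_comm (c : C) (f : M →ₗ[B ⊗[k] C] N) (g : N →ₗ[B ⊗[k] C] M) :
    hattoriStallingsTrace B M ((g ∘ₗ f).restrictScalars B ∘ₗ rightAction k B M c) =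
      hattoriStallingsTrace B N ((f ∘ₗ g).restrictScalars B ∘ₗ rightAction k B N c) := by
  calc hattoriStallingsTrace B M
        (g.restrictScalars B ∘ₗ (f.restrictScalars B ∘ₗ rightAction k B M c))
    _ = hattoriStallingsTrace B N
        ((f.restrictScalars B ∘ₗ rightAction k B M c) ∘ₗ g.restrictScalars B) :=
      hattoriStallingsTrace_comp_comm _ _
    _ = _ := by rw [LinearMap.comp_assoc, ← rightAction_comm]; rfl

end Cyclic

variable {c : C}

theorem trace_mulLeft_comp_mulRight_eq_zero (hc : IsNilpotent c) (b : C) :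
    LinearMap.trace k C (LinearMap.mulLeft k c ∘ₗ LinearMap.mulRight k b) = 0 := by
  have hcomm : Commute (LinearMap.mulLeft k c) (LinearMap.mulRight k b) :=
    LinearMap.commute_mulLeft_right c b
  have hnil : IsNilpotent (LinearMap.mulLeft k c) := (LinearMap.isNilpotent_mulLeft_iff k c).2 hc
  exact (LinearMap.isNilpotent_trace_of_isNilpotent (hcomm.isNilpotent_mul_right hnil)).eq_zero

theorem sum_coord_mul_eq_zero {ι : Type*} [Fintype ι] (v : Module.Basis ι k C)
    (hc : IsNilpotent c) (w : B ⊗[k] C) :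
    ∑ i, (Algebra.TensorProduct.basis B v).coord i ((1 ⊗ₜ (c * v i)) * w) = 0 := by
  classical
  induction w with
  | zero => simp
  | add w w' hw hw' => simp only [mul_add, map_add, Finset.sum_add_distrib, hw, hw', add_zero]
  | tmul a b =>
    have htrace : ∑ i, v.repr (c * v i * b) i = 0 := by
      rw [← trace_mulLeft_comp_mulRight_eq_zero k hc b, LinearMap.trace_eq_matrix_trace k v]
      simp [Matrix.trace, LinearMap.toMatrix_apply, mul_assoc]
    simp only [Algebra.TensorProduct.tmul_mul_tmul, one_mul, Module.Basis.coord_apply,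
      Algebra.TensorProduct.basis_repr_tmul, Finsupp.smul_apply, Finsupp.mapRange_apply,
      smul_eq_mul, ← Finset.mul_sum, ← map_sum, htrace, map_zero, mul_zero]

variable [FiniteDimensional k C]

theorem trace_comp_rightAction_self_eq_zero (hc : IsNilpotent c)
    (f : B ⊗[k] C →ₗ[B ⊗[k] C] B ⊗[k] C) :
    hattoriStallingsTrace B (B ⊗[k] C) (f.restrictScalars B ∘ₗ rightAction k B _ c) = 0 := by
  let v := Module.finBasis k C
  have hcoord i : f (((1 : B) ⊗ₜ[k] c) • Algebra.TensorProduct.basis B v i) =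
      (1 ⊗ₜ (c * v i)) * f 1 := by
    rw [Algebra.TensorProduct.basis_apply, ← smul_eq_mul, ← map_smul f]
    simp
  calc hattoriStallingsTrace B (B ⊗[k] C) (f.restrictScalars B ∘ₗ rightAction k B _ c)
    _ = ∑ i, QuotientAddGroup.mk ((Algebra.TensorProduct.basis B v).coord i
          (f (((1 : B) ⊗ₜ[k] c) • Algebra.TensorProduct.basis B v i))) :=
      hattoriStallingsTrace_eq_sum (isCoordinateSystem_basis (Algebra.TensorProduct.basis B v)) _
    _ = 0 := by
      simp only [hcoord, ← QuotientAddGroup.mk_sum, sum_coord_mul_eq_zero k v hc,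
        QuotientAddGroup.mk_zero]

theorem trace_comp_rightAction_pi_eq_zero {ι : Type*} [Finite ι] (hc : IsNilpotent c)
    (f : (ι → B ⊗[k] C) →ₗ[B ⊗[k] C] (ι → B ⊗[k] C)) :
    hattoriStallingsTrace B (ι → B ⊗[k] C) (f.restrictScalars B ∘ₗ rightAction k B _ c) = 0 := by
  classical
  have := Fintype.ofFinite ι
  let incl (j : ι) := LinearMap.single (B ⊗[k] C) (fun _ : ι ↦ B ⊗[k] C) j
  let proj (j : ι) := LinearMap.proj (R := B ⊗[k] C) (φ := fun _ : ι ↦ B ⊗[k] C) j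
  have hf : f.restrictScalars B ∘ₗ rightAction k B _ c =
      ∑ j, (incl j ∘ₗ proj j ∘ₗ f).restrictScalars B ∘ₗ rightAction k B _ c := by
    ext x j
    simp [incl, proj, Finset.sum_apply, Pi.single_apply]
  rw [hf, map_sum]
  refine Finset.sum_eq_zero fun j _ ↦ ?_
  rw [trace_comp_rightAction_comm]
  exact trace_comp_rightAction_self_eq_zero k hc _

end TensorAction

section TensorStable

variable {k B C M N : Type} [Field k] [Ring B] [Algebra k B] [Ring C] [Algebra k C]
  [AddCommGroup M] [Module B M] [Module (B ⊗[k] C) M] [IsScalarTower B (B ⊗[k] C) M]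
  [AddCommGroup N] [Module B N] [Module (B ⊗[k] C) N] [IsScalarTower B (B ⊗[k] C) N]
  [FiniteDimensional k C] {c : C}

/-- A map through a projective module can be rerouted through the finite free cover of `M`. -/
theorem FactorsThroughProjective.trace_comp_rightAction_eq_zero
    [Module.Finite B M] [Module.Projective B M] {f : M →ₗ[B ⊗[k] C] M}
    (hf : FactorsThroughProjective f) (hc : IsNilpotent c) :
    hattoriStallingsTrace B M (f.restrictScalars B ∘ₗ rightAction k B M c) = 0 := by
  obtain ⟨Q, α, β, hQ, rfl⟩ := hf
  have : Module.Finite (B ⊗[k] C) M := .of_restrictScalars_finite B _ M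
  obtain ⟨n, q, hq⟩ := Module.Finite.exists_fin' (B ⊗[k] C) M
  obtain ⟨b, rfl⟩ := Module.projective_lifting_property q β hq
  rw [LinearMap.comp_assoc, trace_comp_rightAction_comm]
  exact trace_comp_rightAction_pi_eq_zero k hc _

theorem StablyIso.trace_rightAction_eq [Module.Finite B M] [Module.Projective B M]
    [Module.Finite B N] [Module.Projective B N] (h : StablyIso (B ⊗[k] C) M N)
    (hc : IsNilpotent c) :
    hattoriStallingsTrace B M (rightAction k B M c) =
      hattoriStallingsTrace B N (rightAction k B N c) := by
  obtain ⟨u, v, hvu, huv⟩ := h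
  have hM : hattoriStallingsTrace B M ((v ∘ₗ u).restrictScalars B ∘ₗ rightAction k B M c) =
      hattoriStallingsTrace B M (rightAction k B M c) :=
    sub_eq_zero.1 ((map_sub _ _ _).symm.trans (hvu.trace_comp_rightAction_eq_zero hc))
  have hN : hattoriStallingsTrace B N ((u ∘ₗ v).restrictScalars B ∘ₗ rightAction k B N c) =
      hattoriStallingsTrace B N (rightAction k B N c) :=
    sub_eq_zero.1 ((map_sub _ _ _).symm.trans (huv.trace_comp_rightAction_eq_zero hc))
  rw [← hM, ← hN, trace_comp_rightAction_comm]

theorem exists_isSyzygy_trace_rightAction_neg [Module.Finite B N] [Module.Projective B N]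
    (hc : IsNilpotent c) :
    ∃ (n : ℕ) (K : Submodule (B ⊗[k] C) (Fin n → B ⊗[k] C)) (_ : Module.Finite B K)
      (_ : Module.Projective B K), IsSyzygy (B ⊗[k] C) K N ∧
      hattoriStallingsTrace B K (rightAction k B K c) =
        -hattoriStallingsTrace B N (rightAction k B N c) := by
  have : Module.Finite (B ⊗[k] C) N := .of_restrictScalars_finite B _ N
  obtain ⟨n, p, hp⟩ := Module.Finite.exists_fin' (B ⊗[k] C) N
  let i := (LinearMap.ker p).subtype
  have hi : Function.Injective i := Submodule.injective_subtype _
  have hip : LinearMap.range i = LinearMap.ker p := Submodule.range_subtype _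
  have hipB : LinearMap.range (i.restrictScalars B) = LinearMap.ker (p.restrictScalars B) :=
    SetLike.ext fun x ↦ SetLike.ext_iff.1 hip x
  obtain ⟨r, s, hri, -, -⟩ := exists_splitting (R := B) hi hp hipB
  have hfin : Module.Finite B (LinearMap.ker p) :=
    .of_surjective r fun x ↦ ⟨i x, LinearMap.congr_fun hri x⟩
  have hproj : Module.Projective B (LinearMap.ker p) := .of_split _ r hri
  refine ⟨n, LinearMap.ker p, hfin, hproj, ⟨ModuleCat.of _ _, i, p, inferInstance, hi, hp, hip⟩, ?_⟩
  rw [eq_neg_iff_add_eq_zero, hattoriStallingsTrace_add_of_exact (R := B) hi hp hipB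
    (rightAction_comm k c i) (rightAction_comm k c p)]
  exact trace_comp_rightAction_pi_eq_zero k hc LinearMap.id

/-- `M` is stably isomorphic to a module over `B ⊗ C` which is finitely generated projective
over `B` and on which `c` acts with Hattori–Stallings trace `τ`. -/
def HasStableTrace (k : Type) {B C : Type} [Field k] [Ring B] [Algebra k B] [Ring C] [Algebra k C]
    (c : C) (M : Type) [AddCommGroup M] [Module (B ⊗[k] C) M]
    (τ : B ⧸ commutatorAddSubgroup B) : Prop :=
  ∃ (K : Type) (_ : AddCommGroup K) (_ : Module B K) (_ : Module (B ⊗[k] C) K)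
    (_ : IsScalarTower B (B ⊗[k] C) K) (_ : Module.Finite B K) (_ : Module.Projective B K),
    StablyIso (B ⊗[k] C) M K ∧ hattoriStallingsTrace B K (rightAction k B K c) = τ

namespace HasStableTrace

variable {τ : B ⧸ commutatorAddSubgroup B}

theorem of_isSyzygy {U V : Type} [AddCommGroup U] [Module (B ⊗[k] C) U] [AddCommGroup V]
    [Module (B ⊗[k] C) V] (hUV : IsSyzygy (B ⊗[k] C) U V) (hc : IsNilpotent c)
    (hV : HasStableTrace k c V τ) : HasStableTrace k c U (-τ) := by
  obtain ⟨K, _, _, _, _, _, _, hVK, rfl⟩ := hV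
  obtain ⟨n, L, hfin, hproj, hLK, hL⟩ :=
    exists_isSyzygy_trace_rightAction_neg (k := k) (B := B) (N := K) hc
  exact ⟨L, _, _, _, inferInstance, hfin, hproj, hUV.stablyIso hLK hVK, hL⟩

theorem of_hasProjExactSeq {U V : ModuleCat.{0} (B ⊗[k] C)} {n : ℕ}
    (hUV : HasProjExactSeq (B ⊗[k] C) U V n) (hc : IsNilpotent c) (hV : HasStableTrace k c V τ) :
    HasStableTrace k c U ((-1 : ℤ) ^ n • τ) := by
  induction n generalizing V τ with
  | zero =>
    obtain ⟨K, _, _, _, _, hfin, hproj, hVK, hτ⟩ := hV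
    exact ⟨K, _, _, _, ‹_›, hfin, hproj, hVK.congr_left (HasProjExactSeq.zero_iff.1 hUV).some,
      by simp [hτ]⟩
  | succ n ih =>
    obtain ⟨K, hKV, hUK⟩ := hUV.exists_isSyzygy
    simpa [pow_succ] using ih hUK (of_isSyzygy hKV hc hV)

end HasStableTrace

theorem HasProjExactSeq.trace_rightAction_eq {U V : ModuleCat.{0} (B ⊗[k] C)} [Module B U]
    [IsScalarTower B (B ⊗[k] C) U] [Module.Finite B U] [Module.Projective B U] [Module B V]
    [IsScalarTower B (B ⊗[k] C) V] [Module.Finite B V] [Module.Projective B V] {n : ℕ}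
    (h : HasProjExactSeq (B ⊗[k] C) U V n) (hc : IsNilpotent c) :
    hattoriStallingsTrace B U (rightAction k B U c) =
      (-1 : ℤ) ^ n • hattoriStallingsTrace B V (rightAction k B V c) := by
  have hV : HasStableTrace k c V (hattoriStallingsTrace B V (rightAction k B V c)) :=
    ⟨V, _, _, _, ‹_›, ‹_›, ‹_›, .of_linearEquiv (.refl _ V), rfl⟩
  obtain ⟨K, _, _, _, _, _, _, hUK, hK⟩ := HasStableTrace.of_hasProjExactSeq h hc hV
  rw [← hK, hUK.trace_rightAction_eq hc]

end TensorStable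

/-! ### Twisted bimodules -/

/-- The group of inner automorphisms of a `k`-algebra: the conjugations by units. -/
def innerAutomorphisms (k B : Type*) [CommSemiring k] [Semiring B] [Algebra k B] :
    Subgroup (B ≃ₐ[k] B) :=
  (MulSemiringAction.toAlgAut (ConjAct Bˣ) k B).range

theorem mem_innerAutomorphisms_iff {k B : Type*} [CommSemiring k] [Semiring B] [Algebra k B]
    {φ : B ≃ₐ[k] B} : φ ∈ innerAutomorphisms k B ↔ ∃ u : Bˣ, ∀ b, φ b = u * b * ↑u⁻¹ :=
  ⟨fun ⟨u, hu⟩ ↦ ⟨ConjAct.ofConjAct u, fun b ↦ (DFunLike.congr_fun hu b).symm⟩,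
    fun ⟨u, hu⟩ ↦ ⟨ConjAct.toConjAct u, AlgEquiv.ext fun b ↦ (hu b).symm⟩⟩

theorem exists_mem_innerAutomorphisms_apply_eq (k : Type*) {B : Type*} [CommSemiring k] [Semiring B]
    [Algebra k B] (u : Bˣ) : ∃ ν ∈ innerAutomorphisms k B, ∀ b, ν b = u * b * ↑u⁻¹ :=
  ⟨_, ⟨ConjAct.toConjAct u, rfl⟩, fun _ ↦ rfl⟩

section Twist

variable {k B : Type} [Field k] [Ring B] [Algebra k B]

theorem regularBimodule_smul (x y z : B) :
    (x ⊗ₜ[k] MulOpposite.op y : B ⊗[k] Bᵐᵒᵖ) • (show regularBimodule k B from z) =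
      (x * z * y : B) := by
  let : Module (B ⊗[k] Bᵐᵒᵖ) B := TensorProduct.Algebra.module
  change (x ⊗ₜ[k] MulOpposite.op y : B ⊗[k] Bᵐᵒᵖ) • z = x * z * y
  rw [TensorProduct.Algebra.smul_def, op_smul_eq_mul, smul_eq_mul, mul_assoc]

theorem twistedBimodule_smul (φ : B ≃ₐ[k] B) (x y z : B) :
    (x ⊗ₜ[k] MulOpposite.op y : B ⊗[k] Bᵐᵒᵖ) • (show twistedBimodule k B φ from z) =
      (x * z * φ y : B) :=
  regularBimodule_smul x (φ y) z

/-- An identification of the additive group of a bimodule with `B` under which the action is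
that of `B_φ` is an isomorphism of bimodules. -/
noncomputable def equivTwistedBimodule {M : ModuleCat.{0} (B ⊗[k] Bᵐᵒᵖ)} (φ : B ≃ₐ[k] B)
    (e : M ≃+ B) (he : ∀ (x y : B) (m : M), e ((x ⊗ₜ[k] MulOpposite.op y) • m) = x * e m * φ y) :
    M ≃ₗ[B ⊗[k] Bᵐᵒᵖ] twistedBimodule k B φ where
  __ := (e : M ≃+ twistedBimodule k B φ)
  map_smul' s m := by
    let e' : M ≃+ twistedBimodule k B φ := e
    change e' (s • m) = s • e' m
    have htmul (x : B) (y : Bᵐᵒᵖ) : e' ((x ⊗ₜ[k] y) • m) = (x ⊗ₜ[k] y) • e' m :=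
      (he x y.unop m).trans (twistedBimodule_smul φ x y.unop (e m)).symm
    induction s with
    | zero => simpa only [zero_tmul] using htmul 0 0
    | add s t hs ht => rw [add_smul, map_add, add_smul, ← hs, ← ht]
    | tmul x y => exact htmul x y

/-- If `φ` is conjugation by `u`, then right multiplication by `u⁻¹` maps `B` onto `B_φ`. -/
theorem nonempty_equiv_twistedBimodule {φ : B ≃ₐ[k] B} (hφ : φ ∈ innerAutomorphisms k B) :
    Nonempty (regularBimodule k B ≃ₗ[B ⊗[k] Bᵐᵒᵖ] twistedBimodule k B φ) := by
  obtain ⟨u, hu⟩ := mem_innerAutomorphisms_iff.1 hφ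
  let e : B ≃+ B := { u⁻¹.mulRight with map_add' := fun x y ↦ add_mul x y _ }
  refine ⟨equivTwistedBimodule φ e fun x y z ↦ ?_⟩
  have hconj (z : B) : x * z * y * ↑u⁻¹ = x * (z * ↑u⁻¹) * φ y := by simp [hu, mul_assoc]
  exact (congrArg (· * (↑u⁻¹ : B)) (regularBimodule_smul x y z)).trans (hconj z)

/-- The automorphism `id ⊗ φ` of the enveloping algebra; restricting scalars along it twists the
right action by `φ`. -/
noncomputable def envelopingTwist (φ : B ≃ₐ[k] B) : B ⊗[k] Bᵐᵒᵖ ≃+* B ⊗[k] Bᵐᵒᵖ :=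
  (Algebra.TensorProduct.congr (AlgEquiv.refl (R := k) (A₁ := B)) (AlgEquiv.op φ)).toRingEquiv

/-- Twisting the regular bimodule by `φ` gives `B_φ`. -/
noncomputable def restrictScalarsRegularEquiv (φ : B ≃ₐ[k] B) :
    (ModuleCat.restrictScalars (envelopingTwist φ : B ⊗[k] Bᵐᵒᵖ →+* B ⊗[k] Bᵐᵒᵖ)).obj
      (regularBimodule k B) ≃ₗ[B ⊗[k] Bᵐᵒᵖ] twistedBimodule k B φ :=
  equivTwistedBimodule φ (AddEquiv.refl B) fun x y ↦ regularBimodule_smul x (φ y)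

/-- Twisting `B_ψ` by `φ` gives `B_{ψφ}`. -/
noncomputable def restrictScalarsTwistedEquiv (φ ψ : B ≃ₐ[k] B) :
    (ModuleCat.restrictScalars (envelopingTwist φ : B ⊗[k] Bᵐᵒᵖ →+* B ⊗[k] Bᵐᵒᵖ)).obj
      (twistedBimodule k B ψ) ≃ₗ[B ⊗[k] Bᵐᵒᵖ] twistedBimodule k B (ψ * φ) :=
  equivTwistedBimodule (ψ * φ) (AddEquiv.refl B) fun x y ↦ twistedBimodule_smul ψ x (φ y)

theorem HasProjExactSeq.pow {φ : B ≃ₐ[k] B} {n : ℕ}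
    (h : HasProjExactSeq (B ⊗[k] Bᵐᵒᵖ) (twistedBimodule k B φ) (regularBimodule k B) n) (m : ℕ) :
    HasProjExactSeq (B ⊗[k] Bᵐᵒᵖ) (twistedBimodule k B (φ ^ m)) (regularBimodule k B)
      (m * n) := by
  induction m with
  | zero =>
    rw [pow_zero, zero_mul, zero_iff]
    exact (nonempty_equiv_twistedBimodule (one_mem _)).map LinearEquiv.symm
  | succ m ih =>
    have hstep := ((h.restrictScalars (envelopingTwist (φ ^ m))).congr_left
      (restrictScalarsTwistedEquiv (φ ^ m) φ).symm).congr_right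
      (restrictScalarsRegularEquiv (φ ^ m))
    rw [pow_succ', Nat.succ_mul, add_comm]
    exact hstep.trans ih

theorem IsPeriodicAlgebra.isTwistedPeriodicAlgebra (h : IsPeriodicAlgebra k B) :
    IsTwistedPeriodicAlgebra k B :=
  let ⟨n, hn, hseq⟩ := h
  let ⟨e⟩ := nonempty_equiv_twistedBimodule (one_mem (innerAutomorphisms k B))
  ⟨n, 1, hn, hseq.congr_left e.symm⟩

theorem isPeriodicAlgebra_of_pow_mem_innerAutomorphisms {φ : B ≃ₐ[k] B} {m n : ℕ}
    (h : HasProjExactSeq (B ⊗[k] Bᵐᵒᵖ) (twistedBimodule k B φ) (regularBimodule k B) n)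
    (hn : 1 ≤ n) (hm : 1 ≤ m) (hφ : φ ^ m ∈ innerAutomorphisms k B) :
    IsPeriodicAlgebra k B :=
  let ⟨e⟩ := nonempty_equiv_twistedBimodule hφ
  ⟨m * n, Nat.mul_pos hm hn, (h.pow m).congr_left e⟩

noncomputable instance twistedBimodule.leftModule (φ : B ≃ₐ[k] B) :
    Module B (twistedBimodule k B φ) :=
  inferInstanceAs (Module B B)

/-- As a left module, `B_φ` is the regular module. -/
noncomputable def twistedBimoduleLinearEquiv (φ : B ≃ₐ[k] B) : twistedBimodule k B φ ≃ₗ[B] B :=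
  LinearEquiv.refl B B

instance (φ : B ≃ₐ[k] B) : Module.Finite B (twistedBimodule k B φ) :=
  .equiv (twistedBimoduleLinearEquiv φ).symm

instance (φ : B ≃ₐ[k] B) : Module.Projective B (twistedBimodule k B φ) :=
  .of_equiv (twistedBimoduleLinearEquiv φ).symm

instance (φ : B ≃ₐ[k] B) : IsScalarTower B (B ⊗[k] Bᵐᵒᵖ) (twistedBimodule k B φ) where
  smul_assoc b s m := by
    have hleft (z : twistedBimodule k B φ) : b • z = (b ⊗ₜ[k] (1 : Bᵐᵒᵖ)) • z :=
      ((twistedBimodule_smul φ b 1 z).trans (by rw [map_one, mul_one]; rfl)).symm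
    rw [hleft, smul_smul]
    congr 1
    induction s with
    | zero => simp
    | add s t hs ht => rw [smul_add, mul_add, hs, ht]
    | tmul x y => rw [smul_tmul', Algebra.TensorProduct.tmul_mul_tmul, one_mul, smul_eq_mul]

theorem trace_rightAction_twistedBimodule (φ : B ≃ₐ[k] B) (r : B) :
    hattoriStallingsTrace B (twistedBimodule k B φ) (rightAction k B _ (MulOpposite.op r)) =
      QuotientAddGroup.mk (φ r) := by
  rw [hattoriStallingsTrace_eq_mk (twistedBimoduleLinearEquiv φ)]
  congr 1
  exact (twistedBimodule_smul φ 1 r (1 : B)).trans (by rw [one_mul, one_mul])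

/-- The traces of right multiplication by `r` alternate along an exact sequence of bimodules with
projective middle terms; on `B_φ` and on `B` they are the classes of `φ r` and `r`. -/
theorem HasProjExactSeq.mk_apply_eq [FiniteDimensional k B] {φ : B ≃ₐ[k] B} {n : ℕ}
    (h : HasProjExactSeq (B ⊗[k] Bᵐᵒᵖ) (twistedBimodule k B φ) (regularBimodule k B) n)
    {r : B} (hr : IsNilpotent r) :
    (QuotientAddGroup.mk (φ r) : B ⧸ commutatorAddSubgroup B) =
      (-1 : ℤ) ^ n • QuotientAddGroup.mk r := by
  obtain ⟨e⟩ := nonempty_equiv_twistedBimodule (one_mem (innerAutomorphisms k B))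
  have hop : IsNilpotent (MulOpposite.op r) := by
    obtain ⟨m, hm⟩ := hr
    exact ⟨m, by rw [← MulOpposite.op_pow, hm, MulOpposite.op_zero]⟩
  have htrace := (h.congr_right e).trace_rightAction_eq hop
  rwa [trace_rightAction_twistedBimodule, trace_rightAction_twistedBimodule] at htrace

end Twist

/-! ### Cocycles on a preorder -/

section Cocycle

variable {P G : Type*} [Preorder P]

/-- A `1`-cocycle of the preorder `P` with values in `G`; only its values at pairs `x ≤ y`
matter. -/
def IsOrderCocycle [Mul G] (c : P → P → G) : Prop :=
  ∀ ⦃x y z⦄, x ≤ y → y ≤ z → c x z = c x y * c y z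

/-- The cocycle of `P` given by `(x, y) ↦ (g x)⁻¹ * g y` on pairs `x ≤ y`. -/
def IsOrderCoboundary [Group G] (c : P → P → G) : Prop :=
  ∃ g : P → G, ∀ ⦃x y⦄, x ≤ y → c x y = (g x)⁻¹ * g y

theorem IsOrderCocycle.isOrderCoboundary_of_comparable [Group G] {c : P → P → G}
    (hc : IsOrderCocycle c) {o : P} (ho : ∀ y, o ≤ y ∨ y ≤ o) : IsOrderCoboundary c := by
  classical
  refine ⟨fun y ↦ if o ≤ y then c o y else (c y o)⁻¹, fun x y hxy ↦ ?_⟩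
  by_cases hox : o ≤ x
  · simp only [if_pos hox, if_pos (hox.trans hxy), hc hox hxy, inv_mul_cancel_left]
  have hxo : x ≤ o := (ho x).resolve_left hox
  by_cases hoy : o ≤ y
  · simp only [if_neg hox, if_pos hoy, inv_inv, hc hxo hoy]
  have hyo : y ≤ o := (ho y).resolve_left hoy
  simp only [if_neg hox, if_neg hoy, inv_inv, hc hxy hyo, mul_inv_cancel_right]

end Cocycle

/-! ### Orthogonal idempotents and characters -/

section Idempotents

variable {R ι : Type*} [Semiring R] [Fintype ι] {e f : ι → R}

theorem orthogonalIdempotents_sum_mul_mul (he : OrthogonalIdempotents e)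
    (hf : OrthogonalIdempotents f) (i : ι) :
    (∑ j, f j * e j) * e i = f i * ∑ j, f j * e j := by
  classical
  simp only [Finset.sum_mul, Finset.mul_sum, mul_assoc, he.mul_eq]
  simp only [← mul_assoc, hf.mul_eq, mul_ite, ite_mul, mul_zero, zero_mul, Finset.sum_ite_eq,
    Finset.sum_ite_eq', Finset.mem_univ, if_true]

end Idempotents

theorem exists_map_eq_one {R ι D : Type*} [Semiring R] [Fintype ι] {e : ι → R} [Semiring D]
    [IsDomain D] (he : CompleteOrthogonalIdempotents e) (χ : R →+* D) : ∃ i, χ (e i) = 1 := by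
  have hsum : ∑ i, χ (e i) ≠ 0 := by
    rw [← map_sum, he.complete, map_one]
    exact one_ne_zero
  obtain ⟨i, -, hi⟩ := Finset.exists_ne_zero_of_sum_ne_zero hsum
  exact ⟨i, mul_left_cancel₀ hi (by rw [← map_mul, he.idem, mul_one])⟩

theorem exists_mem_innerAutomorphisms_mul_apply_eq {k B ι : Type*} [CommSemiring k] [Semiring B]
    [Algebra k B] [Fintype ι] {e : ι → B} (he : OrthogonalIdempotents e) (ψ : B ≃ₐ[k] B)
    (hu : IsUnit (∑ i, ψ (e i) * e i)) :
    ∃ ν ∈ innerAutomorphisms k B, ∀ i, (ν * ψ) (e i) = e i := by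
  obtain ⟨u, hu⟩ := hu
  obtain ⟨ν, hν, hνu⟩ := exists_mem_innerAutomorphisms_apply_eq k u⁻¹
  refine ⟨ν, hν, fun i ↦ ?_⟩
  have hintertwine : u * e i = ψ (e i) * u :=
    hu ▸ orthogonalIdempotents_sum_mul_mul he (he.map (ψ : B →+* B)) i
  rw [AlgEquiv.mul_apply, hνu, inv_inv, mul_assoc, ← hintertwine, Units.inv_mul_cancel_left]

section DiagonalUnit

variable {k B ι : Type*} [CommSemiring k] [Semiring B] [Algebra k B] [Fintype ι] {e : ι → B}

/-- The unit `∑ gᵢ eᵢ` attached to invertible scalars `gᵢ` and complete orthogonal idempotents. -/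
def diagonalUnit (he : CompleteOrthogonalIdempotents e) (g : ι → kˣ) : Bˣ where
  val := ∑ i, g i • e i
  inv := ∑ i, (g i)⁻¹ • e i
  val_inv := by
    classical
    simp [Finset.sum_mul_sum, smul_mul_smul_comm, he.mul_eq, he.complete]
  inv_val := by
    classical
    simp [Finset.sum_mul_sum, smul_mul_smul_comm, he.mul_eq, he.complete]

theorem diagonalUnit_mul_mul_inv (he : CompleteOrthogonalIdempotents e) (g : ι → kˣ) {i j : ι}
    {b : B} (hi : e i * b = b) (hj : b * e j = b) :
    diagonalUnit he g * b * ↑(diagonalUnit he g)⁻¹ = (g i * (g j)⁻¹) • b := by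
  classical
  have hleft : diagonalUnit he g * e i = g i • e i := by
    simp [diagonalUnit, Finset.sum_mul, smul_mul_assoc, he.mul_eq]
  have hright : e j * ↑(diagonalUnit he g)⁻¹ = (g j)⁻¹ • e j := by
    change e j * ∑ l, (g l)⁻¹ • e l = _
    simp [Finset.mul_sum, mul_smul_comm, he.mul_eq]
  calc diagonalUnit he g * b * ↑(diagonalUnit he g)⁻¹
      = diagonalUnit he g * e i * b * (e j * ↑(diagonalUnit he g)⁻¹) := by
        rw [mul_assoc _ (e i), hi, ← mul_assoc, mul_assoc _ b (e j), hj]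
    _ = (g i * (g j)⁻¹) • b := by
        rw [hleft, hright, smul_mul_assoc, hi, smul_mul_smul_comm, hj]

end DiagonalUnit

theorem exists_pow_algHom_apply_eq {k B C : Type*} [CommSemiring k] [Semiring B] [Algebra k B]
    [Semiring C] [Algebra k C] [Finite (B →ₐ[k] C)] (φ : B ≃ₐ[k] B) :
    ∃ m, 1 ≤ m ∧ ∀ (χ : B →ₐ[k] C) (b : B), χ ((φ ^ m) b) = χ b := by
  let permute : (B ≃ₐ[k] B) →* Equiv.Perm (B →ₐ[k] C) :=
    { toFun := fun φ ↦ φ.arrowCongr AlgEquiv.refl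
      map_one' := AlgEquiv.arrowCongr_refl
      map_mul' := fun _ _ ↦ rfl }
  refine ⟨orderOf (permute φ), orderOf_pos _, fun χ b ↦ ?_⟩
  have hfix : permute (φ ^ orderOf (permute φ)) = 1 := by rw [map_pow, pow_orderOf_eq_one]
  have hχ := DFunLike.congr_fun (DFunLike.congr_fun hfix χ) ((φ ^ orderOf (permute φ)) b)
  exact hχ.symm.trans (congrArg χ (AlgEquiv.symm_apply_apply _ b))

/-! ### Incidence algebras -/

section Regular

variable {k P : Type*}

instance [Field k] [Preorder P] [Finite P] : FiniteDimensional k (IncidenceAlgebra k P) :=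
  let toFunction : IncidenceAlgebra k P →ₗ[k] P → P → k :=
    { toFun := DFunLike.coe
      map_add' := fun _ _ ↦ rfl
      map_smul' := fun _ _ ↦ rfl }
  .of_injective toFunction DFunLike.coe_injective

theorem isRightRegular_of_diag_ne_zero [Ring k] [NoZeroDivisors k] [PartialOrder P]
    [LocallyFiniteOrder P] [WellFoundedLT P] {f : IncidenceAlgebra k P} (hf : ∀ x, f x x ≠ 0) :
    IsRightRegular f := by
  classical
  refine isRightRegular_of_non_zero_divisor f fun g hg ↦ ?_
  ext x y hxy
  induction y using WellFoundedLT.induction with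
  | ind y ih =>
    have hsum : ∑ z ∈ Finset.Icc x y, g x z * f z y = 0 := by
      rw [← IncidenceAlgebra.mul_apply, hg, IncidenceAlgebra.zero_apply]
    rw [Finset.sum_eq_single_of_mem y (Finset.right_mem_Icc.2 hxy)] at hsum
    · exact (mul_eq_zero.1 hsum).resolve_right (hf y)
    · intro z hz hzy
      obtain ⟨hxz, hle⟩ := Finset.mem_Icc.1 hz
      rw [ih z (hle.lt_of_ne hzy) hxz, IncidenceAlgebra.zero_apply, zero_mul]

theorem isUnit_of_diag_ne_zero [Field k] [PartialOrder P] [LocallyFiniteOrder P] [Finite P]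
    [DecidableEq P] {f : IncidenceAlgebra k P} (hf : ∀ x, f x x ≠ 0) : IsUnit f :=
  have : IsArtinianRing (IncidenceAlgebra k P) := .of_finite k _
  IsArtinianRing.isUnit_iff_isRightRegular.2 (isRightRegular_of_diag_ne_zero hf)

end Regular

section MatrixUnits

variable {k P : Type*} [PartialOrder P] [DecidableEq P] {x y z : P}

/-- The matrix unit of the incidence algebra at a pair `x ≤ y`. -/
def incidenceUnit (k : Type*) [Zero k] [One k] (h : x ≤ y) : IncidenceAlgebra k P where
  toFun := Matrix.single x y 1
  eq_zero_of_not_le' a b hab :=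
    Matrix.single_apply_of_ne x y 1 a b fun hxy ↦ hab (hxy.1 ▸ hxy.2 ▸ h)

theorem incidenceUnit_apply_self [Zero k] [One k] (h : x ≤ y) : incidenceUnit k h x y = 1 :=
  Matrix.single_apply_same x y 1

variable [LocallyFiniteOrder P] [CommSemiring k]

/-- The character `f ↦ f x x` of the incidence algebra. -/
def incidenceDiag (k : Type*) [CommSemiring k] (x : P) : IncidenceAlgebra k P →ₐ[k] k :=
  AlgHom.ofLinearMap
    { toFun := fun f ↦ f x x
      map_add' := fun _ _ ↦ rfl
      map_smul' := fun _ _ ↦ rfl }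
    (if_pos rfl) fun f g ↦ by simp

/-- The embedding of the incidence algebra into the full matrix algebra. -/
def incidenceToMatrix (k P : Type*) [CommSemiring k] [PartialOrder P] [DecidableEq P]
    [LocallyFiniteOrder P] [Fintype P] : IncidenceAlgebra k P →ₐ[k] Matrix P P k :=
  AlgHom.ofLinearMap
    { toFun := fun f ↦ Matrix.of f
      map_add' := fun _ _ ↦ rfl
      map_smul' := fun _ _ ↦ rfl }
    rfl fun f g ↦ by
      ext a b
      refine Finset.sum_subset (Finset.subset_univ _) fun x _ hx ↦ ?_
      rw [Finset.mem_Icc, not_and_or] at hx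
      rcases hx with hx | hx <;> simp [IncidenceAlgebra.apply_eq_zero_of_not_le hx]

theorem incidenceToMatrix_injective [Fintype P] : Function.Injective (incidenceToMatrix k P) :=
  DFunLike.coe_injective

theorem incidenceToMatrix_incidenceUnit [Fintype P] (h : x ≤ y) :
    incidenceToMatrix k P (incidenceUnit k h) = Matrix.single x y 1 :=
  rfl

theorem incidenceToMatrix_incidenceUnit_mul_mul [Fintype P] (f : IncidenceAlgebra k P) (x y : P) :
    incidenceToMatrix k P (incidenceUnit k (le_refl x) * f * incidenceUnit k (le_refl y)) =
      Matrix.single x y (f x y) := by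
  rw [map_mul, map_mul, incidenceToMatrix_incidenceUnit, incidenceToMatrix_incidenceUnit,
    Matrix.single_mul_mul_single, one_mul, mul_one]
  rfl

theorem completeOrthogonalIdempotents_incidenceUnit [Fintype P] :
    CompleteOrthogonalIdempotents fun x : P ↦ incidenceUnit k (le_refl x) := by
  refine (CompleteOrthogonalIdempotents.map_injective_iff
    (incidenceToMatrix k P : IncidenceAlgebra k P →+* Matrix P P k)
    incidenceToMatrix_injective).1 ⟨⟨fun x ↦ ?_, fun x y hxy ↦ ?_⟩, Matrix.sum_single_one⟩
  · exact (Matrix.single_mul_single_same 1 x x x 1).trans (by rw [mul_one]; rfl)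
  · exact Matrix.single_mul_single_of_ne 1 x x y hxy 1

variable [Finite P]

theorem incidenceUnit_mul (hxy : x ≤ y) (hyz : y ≤ z) :
    incidenceUnit k hxy * incidenceUnit k hyz = incidenceUnit k (hxy.trans hyz) := by
  have := Fintype.ofFinite P
  apply incidenceToMatrix_injective
  simp only [map_mul, incidenceToMatrix_incidenceUnit, Matrix.single_mul_single_same, mul_one]

theorem incidenceUnit_mul_mul (f : IncidenceAlgebra k P) (h : x ≤ y) :
    incidenceUnit k (le_refl x) * f * incidenceUnit k (le_refl y) = f x y • incidenceUnit k h := by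
  have := Fintype.ofFinite P
  apply incidenceToMatrix_injective
  rw [incidenceToMatrix_incidenceUnit_mul_mul, map_smul, incidenceToMatrix_incidenceUnit,
    Matrix.smul_single, smul_eq_mul, mul_one]

theorem incidenceUnit_mul_mul_of_not_le (f : IncidenceAlgebra k P) (h : ¬ x ≤ y) :
    incidenceUnit k (le_refl x) * f * incidenceUnit k (le_refl y) = 0 := by
  have := Fintype.ofFinite P
  apply incidenceToMatrix_injective
  rw [incidenceToMatrix_incidenceUnit_mul_mul, IncidenceAlgebra.apply_eq_zero_of_not_le h,
    Matrix.single_zero, map_zero]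

theorem linearMap_ext_incidenceUnit {M : Type*} [AddCommMonoid M] [Module k M]
    {F G : IncidenceAlgebra k P →ₗ[k] M}
    (h : ∀ ⦃x y : P⦄ (hxy : x ≤ y), F (incidenceUnit k hxy) = G (incidenceUnit k hxy)) : F = G := by
  have := Fintype.ofFinite P
  have hone : ∑ x : P, incidenceUnit k (le_refl x) = 1 :=
    completeOrthogonalIdempotents_incidenceUnit.complete
  refine LinearMap.ext fun f ↦ ?_
  rw [← one_mul f, ← mul_one (1 * f), ← hone]
  simp only [Finset.sum_mul, Finset.mul_sum, map_sum]
  refine Finset.sum_congr rfl fun y _ ↦ Finset.sum_congr rfl fun x _ ↦ ?_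
  by_cases hxy : x ≤ y
  · rw [incidenceUnit_mul_mul f hxy, map_smul, map_smul, h]
  · rw [incidenceUnit_mul_mul_of_not_le f hxy, map_zero, map_zero]

end MatrixUnits

/-! ### Trivial extensions -/

section SymmetrizingForm

variable {k A : Type} [Field k] [Ring A] [Algebra k A]

theorem dual_smul_apply (a x : A) (f : Module.Dual k A) : (a • f) x = f (x * a) :=
  rfl

theorem dual_op_smul_apply (a x : A) (f : Module.Dual k A) :
    (MulOpposite.op a • f) x = f (a * x) :=
  rfl

instance [FiniteDimensional k A] : FiniteDimensional k (TrivialExtension k A) :=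
  inferInstanceAs (FiniteDimensional k (A × Module.Dual k A))

/-- The linear form `(a, f) ↦ f 1` that makes the trivial extension a symmetric algebra. -/
def symmetrizingForm (k A : Type) [Field k] [Ring A] [Algebra k A] :
    TrivialExtension k A →ₗ[k] k where
  toFun b := b.snd 1
  map_add' _ _ := rfl
  map_smul' _ _ := rfl

theorem symmetrizingForm_mul (b c : TrivialExtension k A) :
    symmetrizingForm k A (b * c) = c.snd b.fst + b.snd c.fst := by
  change (b.fst • c.snd + MulOpposite.op c.fst • b.snd) 1 = _
  rw [LinearMap.add_apply, dual_smul_apply, dual_op_smul_apply, one_mul, mul_one]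

theorem symmetrizingForm_mul_comm (b c : TrivialExtension k A) :
    symmetrizingForm k A (b * c) = symmetrizingForm k A (c * b) := by
  rw [symmetrizingForm_mul, symmetrizingForm_mul, add_comm]

theorem symmetrizingForm_apply_of_mem_innerAutomorphisms
    {ν : TrivialExtension k A ≃ₐ[k] TrivialExtension k A}
    (hν : ν ∈ innerAutomorphisms k (TrivialExtension k A)) (b : TrivialExtension k A) :
    symmetrizingForm k A (ν b) = symmetrizingForm k A b := by
  obtain ⟨u, hu⟩ := mem_innerAutomorphisms_iff.1 hν
  rw [hu, symmetrizingForm_mul_comm, ← mul_assoc, Units.inv_mul, one_mul]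

theorem HasProjExactSeq.symmetrizingForm_apply [FiniteDimensional k A] {n : ℕ}
    {φ : TrivialExtension k A ≃ₐ[k] TrivialExtension k A}
    (h : HasProjExactSeq (TrivialExtension k A ⊗[k] (TrivialExtension k A)ᵐᵒᵖ)
      (twistedBimodule k (TrivialExtension k A) φ) (regularBimodule k (TrivialExtension k A)) n)
    {r : TrivialExtension k A} (hr : IsNilpotent r) :
    symmetrizingForm k A (φ r) = (-1 : ℤ) ^ n • symmetrizingForm k A r := by
  have hmem : -φ r + (-1 : ℤ) ^ n • r ∈ commutatorAddSubgroup (TrivialExtension k A) :=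
    QuotientAddGroup.eq.1 (h.mk_apply_eq hr)
  have hzero := map_eq_zero_of_mem_commutatorAddSubgroup
    (t := (symmetrizingForm k A).toAddMonoidHom) symmetrizingForm_mul_comm hmem
  rw [map_add, map_neg, map_zsmul, neg_add_eq_zero] at hzero
  exact hzero

theorem isNilpotent_inr (f : Module.Dual k A) : IsNilpotent (.inr f : TrivialExtension k A) :=
  ⟨2, by rw [pow_two, TrivSqZeroExt.inr_mul_inr]⟩

theorem algHom_inr_eq_zero (χ : TrivialExtension k A →ₐ[k] k) (f : Module.Dual k A) :
    χ (.inr f) = 0 :=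
  ((isNilpotent_inr f).map χ).eq_zero

/-- The functional `f` is recovered as `f a = symmetrizingForm k A (inr f * inl a)`. -/
theorem algEquiv_eq_one_of_symmetrizingForm_eq
    {θ : TrivialExtension k A ≃ₐ[k] TrivialExtension k A}
    (hinl : ∀ a, θ (.inl a) = .inl a) (hfst : ∀ f, (θ (.inr f)).fst = 0)
    (hform : ∀ f, symmetrizingForm k A (θ (.inr f)) = symmetrizingForm k A (.inr f)) : θ = 1 := by
  have hsnd (f : Module.Dual k A) : (θ (.inr f)).snd = f := by
    ext a
    calc (θ (.inr f)).snd a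
        = symmetrizingForm k A (θ (.inr f) * .inl a) := by simp [symmetrizingForm_mul]
      _ = symmetrizingForm k A (θ (.inr (MulOpposite.op a • f))) := by
          rw [← TrivSqZeroExt.inr_mul_inl, map_mul θ, hinl]
      _ = f a := by rw [hform]; exact congrArg f (mul_one a)
  have hinr (f : Module.Dual k A) : θ (.inr f) = .inr f := TrivSqZeroExt.ext (hfst f) (hsnd f)
  ext b : 1
  rw [← TrivSqZeroExt.inl_fst_add_inr_snd_eq b, map_add, hinl, hinr, AlgEquiv.one_apply]

end SymmetrizingForm

/-! ### Trivial extensions of incidence algebras -/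

section IncidenceTrivialExtension

variable {k P : Type} [Field k] [PartialOrder P] [LocallyFiniteOrder P] [DecidableEq P]

/-- The matrix unit at `x ≤ y`, seen in `T(k[P])`. -/
noncomputable def pathElement (k : Type) [Field k] {x y : P} (h : x ≤ y) :
    TrivialExtension k (IncidenceAlgebra k P) :=
  .inl (incidenceUnit k h)

/-- The idempotent of `T(k[P])` at the element `x` of `P`. -/
noncomputable abbrev vertexIdempotent (k : Type) [Field k] (x : P) :
    TrivialExtension k (IncidenceAlgebra k P) :=
  pathElement k (le_refl x)

/-- The character `(a, f) ↦ a x x` of `T(k[P])`. -/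
noncomputable def vertexCharacter (k : Type) [Field k] (x : P) :
    TrivialExtension k (IncidenceAlgebra k P) →ₐ[k] k :=
  (incidenceDiag k x).comp (TrivSqZeroExt.fstHom k _ _)

theorem pathElement_ne_zero {x y : P} (h : x ≤ y) : pathElement k h ≠ 0 := fun hzero ↦
  one_ne_zero ((incidenceUnit_apply_self (k := k) h).symm.trans
    (congrArg (fun b : TrivialExtension k (IncidenceAlgebra k P) ↦ b.fst x y) hzero))

theorem completeOrthogonalIdempotents_vertexIdempotent [Fintype P] :
    CompleteOrthogonalIdempotents (vertexIdempotent k : P → _) :=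
  completeOrthogonalIdempotents_incidenceUnit.map
    (TrivSqZeroExt.inlHom (IncidenceAlgebra k P) (Module.Dual k (IncidenceAlgebra k P)))

variable [Finite P] {x y : P}

theorem pathElement_mul {z : P} (hxy : x ≤ y) (hyz : y ≤ z) :
    pathElement k hxy * pathElement k hyz = pathElement k (hxy.trans hyz) := by
  rw [pathElement, pathElement, ← TrivSqZeroExt.inl_mul, incidenceUnit_mul, pathElement]

theorem eq_vertexCharacter_of_map_vertexIdempotent_eq_one
    {χ : TrivialExtension k (IncidenceAlgebra k P) →ₐ[k] k}
    (hx : χ (vertexIdempotent k x) = 1) : χ = vertexCharacter k x := by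
  have hinl (a : IncidenceAlgebra k P) : χ (.inl a) = a x x := by
    calc χ (.inl a)
        = χ (vertexIdempotent k x * .inl a * vertexIdempotent k x) := by
          rw [map_mul, map_mul, hx, one_mul, mul_one]
      _ = χ (a x x • vertexIdempotent k x) := by
          rw [vertexIdempotent, pathElement, ← TrivSqZeroExt.inl_mul, ← TrivSqZeroExt.inl_mul,
            incidenceUnit_mul_mul a le_rfl, TrivSqZeroExt.inl_smul]
      _ = a x x := by rw [map_smul, hx, smul_eq_mul, mul_one]
  refine AlgHom.ext fun b ↦ ?_
  rw [← TrivSqZeroExt.inl_fst_add_inr_snd_eq b, map_add, algHom_inr_eq_zero, hinl, map_add,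
    algHom_inr_eq_zero]
  rfl

instance : Finite (TrivialExtension k (IncidenceAlgebra k P) →ₐ[k] k) :=
  have := Fintype.ofFinite P
  Finite.of_surjective (vertexCharacter k) fun χ ↦
    (exists_map_eq_one completeOrthogonalIdempotents_vertexIdempotent χ.toRingHom).imp
      fun _ hx ↦ (eq_vertexCharacter_of_map_vertexIdempotent_eq_one hx).symm

theorem isUnit_of_vertexCharacter_ne_zero {b : TrivialExtension k (IncidenceAlgebra k P)}
    (hb : ∀ x, vertexCharacter k x b ≠ 0) : IsUnit b :=
  TrivSqZeroExt.isUnit_iff_isUnit_fst.2 (isUnit_of_diag_ne_zero hb)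

/-- The summand `e_x D(k[P]) e_y` is dual to `e_y k[P] e_x`, which vanishes unless `y ≤ x`. -/
theorem vertexIdempotent_mul_mul_of_lt (h : x < y)
    (b : TrivialExtension k (IncidenceAlgebra k P)) :
    vertexIdempotent k x * b * vertexIdempotent k y =
      b.fst x y • pathElement k h.le := by
  refine TrivSqZeroExt.ext (incidenceUnit_mul_mul b.fst h.le) (LinearMap.ext fun a ↦ ?_)
  have hzero := incidenceUnit_mul_mul_of_not_le (k := k) a h.not_ge
  simp [pathElement, dual_smul_apply, dual_op_smul_apply, hzero]

end IncidenceTrivialExtension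

section Automorphisms

variable {k P : Type} [Field k] [PartialOrder P] [LocallyFiniteOrder P] [DecidableEq P] [Finite P]
  {ψ : TrivialExtension k (IncidenceAlgebra k P) ≃ₐ[k] TrivialExtension k (IncidenceAlgebra k P)}

theorem exists_mul_apply_vertexIdempotent_eq
    (hψ : ∀ x b, vertexCharacter k x (ψ b) = vertexCharacter k x b) :
    ∃ ν ∈ innerAutomorphisms k (TrivialExtension k (IncidenceAlgebra k P)),
      ∀ x, (ν * ψ) (vertexIdempotent k x) = vertexIdempotent k x := by
  have := Fintype.ofFinite P
  have he := completeOrthogonalIdempotents_vertexIdempotent (k := k) (P := P)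
  refine exists_mem_innerAutomorphisms_mul_apply_eq he.toOrthogonalIdempotents ψ
    (isUnit_of_vertexCharacter_ne_zero fun x ↦ ?_)
  have hone : vertexCharacter k x (∑ y, ψ (vertexIdempotent k y) * vertexIdempotent k y) = 1 := by
    simp only [map_sum, map_mul, hψ]
    simp only [← map_mul, ← map_sum, (he.idem _).eq, he.complete, map_one]
  exact hone ▸ one_ne_zero

theorem exists_apply_pathElement_eq_smul
    (hψ : ∀ x, ψ (vertexIdempotent k x) = vertexIdempotent k x) {x y : P} (h : x ≤ y) :
    ∃ c : kˣ, ψ (pathElement k h) = c • pathElement k h := by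
  rcases h.eq_or_lt with rfl | hlt
  · exact ⟨1, by rw [one_smul, hψ]⟩
  have hpeirce : ψ (pathElement k h) = (ψ (pathElement k h)).fst x y • pathElement k h := by
    rw [← vertexIdempotent_mul_mul_of_lt hlt, ← hψ x, ← hψ y, ← map_mul, ← map_mul,
      pathElement_mul, pathElement_mul]
  refine ⟨Units.mk0 _ fun hzero ↦ pathElement_ne_zero (k := k) h ?_, hpeirce⟩
  rwa [hzero, zero_smul, map_eq_zero_iff ψ ψ.injective] at hpeirce

theorem exists_isOrderCocycle_apply_pathElement
    (hψ : ∀ x, ψ (vertexIdempotent k x) = vertexIdempotent k x) :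
    ∃ c : P → P → kˣ, IsOrderCocycle c ∧
      ∀ ⦃x y⦄ (h : x ≤ y), ψ (pathElement k h) = c x y • pathElement k h := by
  have hscalar (x y : P) : ∃ c : kˣ, ∀ h : x ≤ y, ψ (pathElement k h) = c • pathElement k h := by
    by_cases h : x ≤ y
    · exact (exists_apply_pathElement_eq_smul hψ h).imp fun _ hc _ ↦ hc
    · exact ⟨1, fun h' ↦ absurd h' h⟩
  choose c hc using hscalar
  refine ⟨c, fun x y z hxy hyz ↦ ?_, hc⟩
  have hxz := hxy.trans hyz
  have heq : c x z • pathElement k hxz = (c x y * c y z) • pathElement k hxz := by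
    rw [← hc, ← pathElement_mul hxy hyz, map_mul, hc, hc, smul_mul_smul_comm]
  exact Units.ext (smul_left_injective k (pathElement_ne_zero (k := k) hxz) heq)

theorem exists_mul_apply_inl_eq
    (hcob : ∀ c : P → P → kˣ, IsOrderCocycle c → IsOrderCoboundary c)
    (hψ : ∀ x, ψ (vertexIdempotent k x) = vertexIdempotent k x) :
    ∃ ν ∈ innerAutomorphisms k (TrivialExtension k (IncidenceAlgebra k P)),
      ∀ a, (ν * ψ) (.inl a) = .inl a := by
  have := Fintype.ofFinite P
  obtain ⟨c, hc, hψc⟩ := exists_isOrderCocycle_apply_pathElement hψ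
  obtain ⟨g, hg⟩ := hcob c hc
  have he := completeOrthogonalIdempotents_vertexIdempotent (k := k) (P := P)
  obtain ⟨ν, hν, hνg⟩ := exists_mem_innerAutomorphisms_apply_eq k (diagonalUnit he g)
  let inlMap := (TrivSqZeroExt.inlAlgHom k (IncidenceAlgebra k P)
    (Module.Dual k (IncidenceAlgebra k P))).toLinearMap
  suffices hlin : (ν * ψ).toLinearMap ∘ₗ inlMap = inlMap from
    ⟨ν, hν, DFunLike.congr_fun hlin⟩
  refine linearMap_ext_incidenceUnit fun x y h ↦ ?_
  calc ν (ψ (pathElement k h))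
      = c x y • (g x * (g y)⁻¹) • pathElement k h := by
        rw [hψc, Units.smul_def, map_smul, hνg, diagonalUnit_mul_mul_inv he g
          (pathElement_mul le_rfl h) (pathElement_mul h le_rfl), ← Units.smul_def]
    _ = pathElement k h := by
        rw [smul_smul, hg h, mul_comm (g x), mul_assoc, mul_inv_cancel_left, inv_mul_cancel,
          one_smul]

theorem fst_apply_inr_eq_zero
    (hψ : ∀ x, ψ (vertexIdempotent k x) = vertexIdempotent k x)
    (f : Module.Dual k (IncidenceAlgebra k P)) : (ψ (.inr f)).fst = 0 := by
  ext x y hxy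
  rcases hxy.eq_or_lt with rfl | hlt
  · exact algHom_inr_eq_zero ((vertexCharacter k x).comp ψ.toAlgHom) f
  have hzero : (ψ (.inr f)).fst x y • pathElement k hxy = 0 := by
    rw [← vertexIdempotent_mul_mul_of_lt hlt, ← hψ x, ← hψ y, ← map_mul, ← map_mul,
      vertexIdempotent_mul_mul_of_lt hlt, TrivSqZeroExt.fst_inr, IncidenceAlgebra.zero_apply,
      zero_smul, map_zero]
  exact (smul_eq_zero.1 hzero).resolve_right (pathElement_ne_zero hxy)

theorem mem_innerAutomorphisms_of_symmetrizingForm_eq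
    (hcob : ∀ c : P → P → kˣ, IsOrderCocycle c → IsOrderCoboundary c)
    (hchar : ∀ x b, vertexCharacter k x (ψ b) = vertexCharacter k x b)
    (hform : ∀ f, symmetrizingForm k (IncidenceAlgebra k P) (ψ (.inr f)) =
      symmetrizingForm k (IncidenceAlgebra k P) (.inr f)) :
    ψ ∈ innerAutomorphisms k (TrivialExtension k (IncidenceAlgebra k P)) := by
  obtain ⟨ν, hν, hνψ⟩ := exists_mul_apply_vertexIdempotent_eq hchar
  obtain ⟨μ, hμ, hμνψ⟩ := exists_mul_apply_inl_eq hcob hνψ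
  have hone : μ * (ν * ψ) = 1 := by
    refine algEquiv_eq_one_of_symmetrizingForm_eq hμνψ
      (fst_apply_inr_eq_zero fun x ↦ hμνψ _) fun f ↦ ?_
    rw [AlgEquiv.mul_apply, AlgEquiv.mul_apply,
      symmetrizingForm_apply_of_mem_innerAutomorphisms hμ,
      symmetrizingForm_apply_of_mem_innerAutomorphisms hν, hform]
  rw [← mul_assoc] at hone
  exact eq_inv_of_mul_eq_one_right hone ▸ inv_mem (mul_mem hμ hν)

theorem exists_pow_mem_innerAutomorphisms
    (hcob : ∀ c : P → P → kˣ, IsOrderCocycle c → IsOrderCoboundary c) {n : ℕ}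
    (h : HasProjExactSeq (TrivialExtension k (IncidenceAlgebra k P) ⊗[k]
        (TrivialExtension k (IncidenceAlgebra k P))ᵐᵒᵖ)
      (twistedBimodule k (TrivialExtension k (IncidenceAlgebra k P)) ψ)
      (regularBimodule k (TrivialExtension k (IncidenceAlgebra k P))) n) :
    ∃ m, 1 ≤ m ∧ ψ ^ m ∈ innerAutomorphisms k (TrivialExtension k (IncidenceAlgebra k P)) := by
  obtain ⟨m, hm, hchar⟩ := exists_pow_algHom_apply_eq (C := k) (ψ ^ 2)
  refine ⟨2 * m, by lia, mem_innerAutomorphisms_of_symmetrizingForm_eq hcob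
    (fun x b ↦ pow_mul ψ 2 m ▸ hchar (vertexCharacter k x) b) fun f ↦ ?_⟩
  rw [(h.pow (2 * m)).symmetrizingForm_apply (isNilpotent_inr f), mul_assoc, pow_mul, neg_one_sq,
    one_pow, one_smul]

end Automorphisms

theorem trivialExtension_incidenceAlgebra_periodic_iff_twistedPeriodic_general
    (k P : Type) [Field k] [PartialOrder P] [LocallyFiniteOrder P] [Finite P] [DecidableEq P]
    (hcob : ∀ c : P → P → kˣ, IsOrderCocycle c → IsOrderCoboundary c) :
    IsPeriodicAlgebra k (TrivialExtension k (IncidenceAlgebra k P)) ↔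
      IsTwistedPeriodicAlgebra k (TrivialExtension k (IncidenceAlgebra k P)) := by
  refine ⟨IsPeriodicAlgebra.isTwistedPeriodicAlgebra, ?_⟩
  rintro ⟨n, φ, hn, hseq⟩
  obtain ⟨m, hm, hφ⟩ := exists_pow_mem_innerAutomorphisms hcob hseq
  exact isPeriodicAlgebra_of_pow_mem_innerAutomorphisms hseq hn hm hφ

/-- Let `P` be a finite poset containing an element comparable with every
other element, and let `k[P]` be its incidence algebra over the field `k`. Then the trivial
extension algebra `T(k[P])` is periodic if and only if it is twisted periodic. -/
theorem trivialExtension_incidenceAlgebra_periodic_iff_twistedPeriodic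
    (k P : Type) [Field k] [PartialOrder P] [LocallyFiniteOrder P] [Fintype P] [DecidableEq P]
    (hx : ∃ x : P, ∀ y : P, x ≤ y ∨ y ≤ x) :
    IsPeriodicAlgebra k (TrivialExtension k (IncidenceAlgebra k P)) ↔
      IsTwistedPeriodicAlgebra k (TrivialExtension k (IncidenceAlgebra k P)) := by
  obtain ⟨x, hx⟩ := hx
  exact trivialExtension_incidenceAlgebra_periodic_iff_twistedPeriodic_general k P
    fun _ hc ↦ hc.isOrderCoboundary_of_comparable hx
end

section
/- Let A be a finite-dimensional algebra over a field k and let n be a positive integer. Then there are only finitely many isomorphism classes of A-modules X satisfying dim_k X = n and Ext¹_A(X, X) = 0; that is, there exist finitely many A-modules X_1, …, X_t such that every A-module X with dim_k X = n and Ext¹_A(X,X) = 0 is isomorphic to some X_i. -/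
/-- The `A`-module `X` is `n`-dimensional over the base field `k` (via restriction of
scalars along `algebraMap k A`). -/
def IsKDimEq (k A : Type) [Field k] [Ring A] [Algebra k A]
    (X : Type) [AddCommGroup X] [Module A X] (n : ℕ) : Prop :=
  letI : Module k X := Module.compHom X (algebraMap k A)
  Module.Finite k X ∧ Module.finrank k X = n

/-- `Ext¹_A(X, X) = 0`, phrased equivalently as: every short exact sequence
`0 → X → E → X → 0` of `A`-modules splits. -/
def SelfExtOneVanishes (A : Type) [Ring A] (X : Type) [AddCommGroup X] [Module A X] : Prop :=
  ∀ (E : Type) [AddCommGroup E] [Module A E] (f : X →ₗ[A] E) (g : E →ₗ[A] X),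
    Function.Injective f → Function.Surjective g → LinearMap.range f = LinearMap.ker g →
    ∃ s : X →ₗ[A] E, g ∘ₗ s = LinearMap.id

/-!
Fix a representation `x` of `A` on `V`, and let `y` vary over all representations on `V`. The
`A`-linear maps from `x` to `y` are the kernel of the first differential of the Hochschild complex
`Hom(V, V) → Hom(A, Hom(V, V)) → Hom(A, Hom(A, Hom(V, V)))`, whose differentials `d₀ y`, `d₁ y`
depend polynomially on `y`. If `x` is rigid, this complex is exact in the middle at `y = x`, so
`d₀ x ∘ S + T ∘ d₁ x = 1` for some linear maps `S` and `T`. Let `p y` be the characteristic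
polynomial of `h y = d₀ y ∘ S + T ∘ d₁ y`. As `h y ∘ d₀ y = d₀ y ∘ (S ∘ d₀ y)`, the
Cayley-Hamilton theorem gives `d₀ y ∘ (p y)(S ∘ d₀ y) = 0`. Hence `(p y)(S ∘ d₀ y)` applied to the
identity of `V` is an `A`-linear map from `x` to `y` which depends polynomially on `y` and equals
`± 1` at `y = x`. So each rigid representation has a Zariski neighbourhood of isomorphic ones, and
as the coordinate ring of the space of representations is Noetherian, finitely many of these
neighbourhoods contain all rigid representations.
-/

section LinearAlgebra

theorem exists_comp_comp_eq_self {K V W : Type*} [DivisionRing K] [AddCommGroup V] [Module K V]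
    [AddCommGroup W] [Module K W] (d : V →ₗ[K] W) : ∃ s : W →ₗ[K] V, d ∘ₗ s ∘ₗ d = d := by
  obtain ⟨r, hr⟩ := d.rangeRestrict.exists_rightInverse_of_surjective d.range_rangeRestrict
  obtain ⟨s, rfl⟩ := r.exists_extend
  exact ⟨s, LinearMap.ext fun v ↦ congrArg Subtype.val (LinearMap.congr_fun hr (d.rangeRestrict v))⟩

theorem exists_comp_add_comp_eq_id_of_exact {K V W U : Type*} [DivisionRing K] [AddCommGroup V]
    [Module K V] [AddCommGroup W] [Module K W] [AddCommGroup U] [Module K U] {d₀ : V →ₗ[K] W}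
    {d₁ : W →ₗ[K] U} (h : Function.Exact d₀ d₁) :
    ∃ (s : W →ₗ[K] V) (t : U →ₗ[K] W), d₀ ∘ₗ s + t ∘ₗ d₁ = LinearMap.id := by
  obtain ⟨s, hs⟩ := exists_comp_comp_eq_self d₀
  obtain ⟨t, ht⟩ := exists_comp_comp_eq_self d₁
  refine ⟨s ∘ₗ (LinearMap.id - t ∘ₗ d₁), t, LinearMap.ext fun w ↦ ?_⟩
  have cocycle : d₁ (w - t (d₁ w)) = 0 := by
    simpa [sub_eq_zero] using (LinearMap.congr_fun ht w).symm
  obtain ⟨v, hv⟩ := (h _).mp cocycle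
  have fixed : d₀ (s (w - t (d₁ w))) = w - t (d₁ w) := by
    rw [← hv]
    exact LinearMap.congr_fun hs v
  calc d₀ (s (w - t (d₁ w))) + t (d₁ w) = w - t (d₁ w) + t (d₁ w) := by rw [fixed]
    _ = w := sub_add_cancel w _

theorem aeval_comp_eq_comp_aeval {R V W : Type*} [CommSemiring R] [AddCommMonoid V] [Module R V]
    [AddCommMonoid W] [Module R W] {d : V →ₗ[R] W} {g : Module.End R V} {h : Module.End R W}
    (hd : h ∘ₗ d = d ∘ₗ g) (p : Polynomial R) :
    Polynomial.aeval h p ∘ₗ d = d ∘ₗ Polynomial.aeval g p := by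
  induction p using Polynomial.induction_on' with
  | add p q hp hq => simp only [map_add, LinearMap.add_comp, LinearMap.comp_add, hp, hq]
  | monomial m c =>
    simp only [Polynomial.aeval_monomial, ← Algebra.smul_def, LinearMap.smul_comp,
      LinearMap.comp_smul, Module.End.commute_pow_left_of_commute hd]

end LinearAlgebra

/-- A family `g : P → V` of vectors is *regular* with respect to an algebra `F` of functions on the
parameter space `P` if all its coordinates belong to `F`. The condition is imposed on all linear
functionals, so that it does not refer to a basis. -/
def IsRegularFamily {k P V : Type*} [CommSemiring k] [AddCommMonoid V] [Module k V]
    (F : Subalgebra k (P → k)) (g : P → V) : Prop :=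
  ∀ w : Module.Dual k V, (fun p ↦ w (g p)) ∈ F

namespace IsRegularFamily

section CommSemiring

variable {k P V W U : Type*} [CommSemiring k] [AddCommMonoid V] [Module k V] [AddCommMonoid W]
  [Module k W] [AddCommMonoid U] [Module k U] {F : Subalgebra k (P → k)}

theorem const (v : V) : IsRegularFamily F fun _ : P ↦ v :=
  fun w ↦ F.algebraMap_mem (w v)

theorem add {g h : P → V} (hg : IsRegularFamily F g) (hh : IsRegularFamily F h) :
    IsRegularFamily F fun p ↦ g p + h p := fun w ↦ by
  simp only [map_add]
  exact F.add_mem (hg w) (hh w)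

theorem smul {c : P → k} {g : P → V} (hc : c ∈ F) (hg : IsRegularFamily F g) :
    IsRegularFamily F fun p ↦ c p • g p := fun w ↦ by
  simp only [map_smul]
  exact F.mul_mem hc (hg w)

theorem sum {ι : Type*} (s : Finset ι) {g : ι → P → V} (hg : ∀ i ∈ s, IsRegularFamily F (g i)) :
    IsRegularFamily F fun p ↦ ∑ i ∈ s, g i p := fun w ↦ by
  convert F.sum_mem fun i hi ↦ hg i hi w using 1
  ext p
  simp

theorem map {g : P → V} (hg : IsRegularFamily F g) (L : V →ₗ[k] W) :
    IsRegularFamily F fun p ↦ L (g p) :=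
  fun w ↦ hg (w ∘ₗ L)

theorem of_coord {ι : Type*} [Finite ι] (b : Module.Basis ι k V) {g : P → V}
    (h : ∀ i, (fun p ↦ b.coord i (g p)) ∈ F) : IsRegularFamily F g := by
  have := Fintype.ofFinite ι
  have expansion : g = fun p ↦ ∑ i, b.coord i (g p) • b i := by
    ext p
    exact (b.sum_repr (g p)).symm
  rw [expansion]
  exact sum _ fun i _ ↦ smul (h i) (const (b i))

variable [Module.Free k V] [Module.Finite k V]

theorem bilin {g : P → V} {h : P → W} (hg : IsRegularFamily F g) (hh : IsRegularFamily F h)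
    (B : V →ₗ[k] W →ₗ[k] U) : IsRegularFamily F fun p ↦ B (g p) (h p) := by
  let b := Module.Free.chooseBasis k V
  have expansion :
      (fun p ↦ B (g p) (h p)) = fun p ↦ ∑ i, b.coord i (g p) • B (b i) (h p) := by
    ext p
    conv_lhs => rw [← b.sum_repr (g p)]
    simp only [map_sum, map_smul, LinearMap.sum_apply, LinearMap.smul_apply,
      Module.Basis.coord_apply]
  rw [expansion]
  exact sum _ fun i _ ↦ smul (hg _) (hh.map _)

theorem of_apply {L : P → V →ₗ[k] W} (h : ∀ v, IsRegularFamily F fun p ↦ L p v) :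
    IsRegularFamily F L := by
  let b := Module.Free.chooseBasis k V
  have expansion : L = fun p ↦ ∑ i, LinearMap.smulRightₗ (b.coord i) (L p (b i)) := by
    ext1 p
    refine b.ext fun j ↦ ?_
    simp [Finsupp.single_apply]
  rw [expansion]
  exact sum _ fun i _ ↦ (h (b i)).map _

end CommSemiring

section CommRing

variable {k P V W : Type*} [CommRing k] [AddCommGroup V] [Module k V] [AddCommGroup W]
  [Module k W] {F : Subalgebra k (P → k)}

theorem sub {g h : P → V} (hg : IsRegularFamily F g) (hh : IsRegularFamily F h) :
    IsRegularFamily F fun p ↦ g p - h p := fun w ↦ by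
  simp only [map_sub]
  exact F.sub_mem (hg w) (hh w)

variable [Module.Free k V] [Module.Finite k V]

theorem mul {L M : P → Module.End k V} (hL : IsRegularFamily F L) (hM : IsRegularFamily F M) :
    IsRegularFamily F fun p ↦ L p * M p :=
  hL.bilin hM (LinearMap.mul k (Module.End k V))

theorem pow {L : P → Module.End k V} (hL : IsRegularFamily F L) (m : ℕ) :
    IsRegularFamily F fun p ↦ L p ^ m := by
  induction m with
  | zero => exact const 1
  | succ m ih => simpa only [pow_succ] using ih.mul hL

theorem coeff_charpoly_mem {L : P → Module.End k V} (hL : IsRegularFamily F L) (m : ℕ) :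
    (fun p ↦ (L p).charpoly.coeff m) ∈ F := by
  let b := Module.Free.chooseBasis k V
  let M : Matrix _ _ F := .of fun i j ↦
    ⟨fun p ↦ b.coord i (L p (b j)), hL.map (LinearMap.applyₗ (b j)) (b.coord i)⟩
  let eval (p : P) : F →+* k := (Pi.evalRingHom (fun _ ↦ k) p).comp F.val.toRingHom
  have matrix_at (p : P) : LinearMap.toMatrix b b (L p) = M.map (eval p) := by
    ext i j
    exact LinearMap.toMatrix_apply b b (L p) i j
  have charpoly_at : (fun p ↦ (L p).charpoly.coeff m) = (M.charpoly.coeff m : F) := by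
    ext p
    rw [← LinearMap.charpoly_toMatrix (L p) b, matrix_at, Matrix.charpoly_map,
      Polynomial.coeff_map]
    rfl
  exact charpoly_at ▸ (M.charpoly.coeff m).2

theorem det_mem {L : P → Module.End k V} (hL : IsRegularFamily F L) :
    (fun p ↦ LinearMap.det (L p)) ∈ F := by
  simp only [LinearMap.det_eq_sign_charpoly_coeff]
  exact F.smul_mem (hL.coeff_charpoly_mem 0) ((-1) ^ Module.finrank k V)

theorem aeval_charpoly [Nontrivial k] [Module.Free k W] [Module.Finite k W]
    {L : P → Module.End k V} {M : P → Module.End k W} (hL : IsRegularFamily F L)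
    (hM : IsRegularFamily F M) :
    IsRegularFamily F fun p ↦ Polynomial.aeval (M p) (L p).charpoly := by
  simp only [Polynomial.aeval_eq_sum_range, LinearMap.charpoly_natDegree]
  exact sum _ fun m _ ↦ smul (hL.coeff_charpoly_mem m) (hM.pow m)

end CommRing

section Field

variable {k P V W U : Type*} [Field k] [AddCommGroup V] [Module k V] [FiniteDimensional k V]
  [AddCommGroup W] [Module k W] [AddCommGroup U] [Module k U] {F : Subalgebra k (P → k)}

theorem exists_mem_ker_of_exact [FiniteDimensional k W] {d₀ : P → V →ₗ[k] W}
    {d₁ : P → W →ₗ[k] U} (h₀ : IsRegularFamily F d₀) (h₁ : IsRegularFamily F d₁)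
    (hd : ∀ p, d₁ p ∘ₗ d₀ p = 0) {q : P} (hq : Function.Exact (d₀ q) (d₁ q)) {v : V}
    (hv : d₀ q v = 0) :
    ∃ ψ : P → V, IsRegularFamily F ψ ∧ (∀ p, d₀ p (ψ p) = 0) ∧ ψ q = v := by
  obtain ⟨S, T, hST⟩ := exists_comp_add_comp_eq_id_of_exact hq
  let g (p : P) : Module.End k V := S ∘ₗ d₀ p
  let h (p : P) : Module.End k W := d₀ p ∘ₗ S + T ∘ₗ d₁ p
  have g_regular : IsRegularFamily F g := h₀.map (LinearMap.compRight k S)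
  have h_regular : IsRegularFamily F h :=
    (h₀.map (LinearMap.lcomp k W S)).add (h₁.map (LinearMap.compRight k T))
  have intertwine (p : P) : h p ∘ₗ d₀ p = d₀ p ∘ₗ g p := by
    simp only [h, g, LinearMap.add_comp, LinearMap.comp_assoc, hd, LinearMap.comp_zero, add_zero]
  have annihilate (p : P) : d₀ p ∘ₗ Polynomial.aeval (g p) (h p).charpoly = 0 := by
    rw [← aeval_comp_eq_comp_aeval (intertwine p), LinearMap.aeval_self_charpoly,
      LinearMap.zero_comp]
  have value_at_q :
      Polynomial.aeval (g q) (h q).charpoly v = (-1 : k) ^ Module.finrank k W • v := by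
    have g_v : g q v = (0 : k) • v := by simp [g, hv]
    rw [Module.End.aeval_apply_of_mem_apply_eq_smul g_v, show h q = 1 from hST]
    simp [LinearMap.charpoly_one]
  refine ⟨fun p ↦ (-1 : k) ^ Module.finrank k W • Polynomial.aeval (g p) (h p).charpoly v,
    ?_, fun p ↦ ?_, ?_⟩
  · exact ((h_regular.aeval_charpoly g_regular).map (LinearMap.applyₗ v)).map
      (LinearMap.lsmul k V _)
  · rw [map_smul, show d₀ p _ = 0 from LinearMap.congr_fun (annihilate p) v, smul_zero]
  · simp [value_at_q, smul_smul, ← mul_pow]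

end Field

end IsRegularFamily

theorem exists_fg_subalgebra_isRegularFamily {k P V : Type*} [CommSemiring k] [AddCommMonoid V]
    [Module k V] [Module.Free k V] [Module.Finite k V] (g : P → V) :
    ∃ F : Subalgebra k (P → k), F.FG ∧ IsRegularFamily F g := by
  let b := Module.Free.chooseBasis k V
  let coordinate i : P → k := fun p ↦ b.coord i (g p)
  exact ⟨Algebra.adjoin k (Set.range coordinate),
    Subalgebra.fg_def.mpr ⟨_, Set.finite_range coordinate, rfl⟩,
    .of_coord b fun i ↦ Algebra.subset_adjoin ⟨i, rfl⟩⟩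

theorem exists_finset_forall_exists_notMem {R ι : Type*} [CommRing R] [IsNoetherianRing R]
    (f : ι → R) : ∃ s : Finset ι, ∀ (I : Ideal R) (i : ι), f i ∉ I → ∃ j ∈ s, f j ∉ I := by
  classical
  obtain ⟨t, ht, hspan⟩ := (Submodule.fg_span_iff_fg_span_finset_subset (Set.range f)).mp
    (IsNoetherian.noetherian (Submodule.span R (Set.range f)))
  rw [← Set.image_univ] at ht
  obtain ⟨s, -, rfl⟩ := Finset.subset_set_image_iff.mp ht
  refine ⟨s, fun I i hi ↦ ?_⟩
  by_contra! hs
  have span_le : Submodule.span R (s.image f : Set R) ≤ I :=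
    Submodule.span_le.mpr (by simpa [Set.subset_def] using hs)
  exact hi (span_le (hspan ▸ Submodule.subset_span (Set.mem_range_self i)))

section Representation

variable {k A V W : Type*} [CommRing k] [Ring A] [Algebra k A] [AddCommGroup V] [Module k V]
  [AddCommGroup W] [Module k W]

/-- The `A`-module given by a representation `ρ` of the algebra `A` on `V`: a type synonym of `V`,
as the module structure depends on `ρ`. -/
def RepresentationModule (_ρ : A →ₐ[k] Module.End k V) : Type _ := V

namespace RepresentationModule

instance (ρ : A →ₐ[k] Module.End k V) : AddCommGroup (RepresentationModule ρ) :=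
  inferInstanceAs (AddCommGroup V)

instance (ρ : A →ₐ[k] Module.End k V) : Module k (RepresentationModule ρ) :=
  inferInstanceAs (Module k V)

instance (ρ : A →ₐ[k] Module.End k V) : Module A (RepresentationModule ρ) :=
  Module.compHom V ρ.toRingHom

/-- The identity of `V`, viewed as a map from `V` to the type synonym. -/
def of (ρ : A →ₐ[k] Module.End k V) : V ≃ₗ[k] RepresentationModule ρ :=
  LinearEquiv.refl k V

theorem smul_of (ρ : A →ₐ[k] Module.End k V) (a : A) (v : V) : a • of ρ v = of ρ (ρ a v) := rfl

instance (ρ : A →ₐ[k] Module.End k V) : IsScalarTower k A (RepresentationModule ρ) where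
  smul_assoc c a v := by
    obtain ⟨v, rfl⟩ := (of ρ).surjective v
    simp [smul_of]

/-- The `A`-linear map given by a `k`-linear map that intertwines two representations. -/
def map {x : A →ₐ[k] Module.End k V} {y : A →ₐ[k] Module.End k W} (φ : V →ₗ[k] W)
    (hφ : ∀ a, φ ∘ₗ x a = y a ∘ₗ φ) : RepresentationModule x →ₗ[A] RepresentationModule y where
  toFun v := of y (φ ((of x).symm v))
  map_add' := by simp
  map_smul' a v := congrArg (of y) (LinearMap.congr_fun (hφ a) ((of x).symm v))

end RepresentationModule

/-- The differential from 0-cochains to 1-cochains in the Hochschild complex of `A` with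
coefficients in `Hom(V, W)`. Its kernel consists of the `A`-linear maps from `x` to `y`. -/
def hochschildD₀ (x : A →ₐ[k] Module.End k V) (y : A →ₐ[k] Module.End k W) :
    (V →ₗ[k] W) →ₗ[k] A →ₗ[k] V →ₗ[k] W :=
  LinearMap.mk₂ k (fun φ a ↦ y a ∘ₗ φ - φ ∘ₗ x a)
    (fun φ χ a ↦ by rw [LinearMap.comp_add, LinearMap.add_comp]; abel)
    (fun c φ a ↦ by rw [LinearMap.comp_smul, LinearMap.smul_comp, smul_sub])
    (fun φ a b ↦ by rw [map_add, map_add, LinearMap.add_comp, LinearMap.comp_add]; abel)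
    (fun c φ a ↦ by rw [map_smul, map_smul, LinearMap.smul_comp, LinearMap.comp_smul, smul_sub])

theorem hochschildD₀_apply (x : A →ₐ[k] Module.End k V) (y : A →ₐ[k] Module.End k W)
    (φ : V →ₗ[k] W) (a : A) : hochschildD₀ x y φ a = y a ∘ₗ φ - φ ∘ₗ x a := rfl

/-- The differential from 1-cochains to 2-cochains in the Hochschild complex of `A` with
coefficients in `Hom(V, W)`. Its kernel consists of the cocycles that define extensions of `x`
by `y`. -/
def hochschildD₁ (x : A →ₐ[k] Module.End k V) (y : A →ₐ[k] Module.End k W) :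
    (A →ₗ[k] V →ₗ[k] W) →ₗ[k] A →ₗ[k] A →ₗ[k] V →ₗ[k] W where
  toFun θ := LinearMap.mk₂ k (fun a b ↦ y a ∘ₗ θ b - θ (a * b) + θ a ∘ₗ x b)
    (fun a a' b ↦ by simp only [map_add, add_mul, LinearMap.add_comp]; abel)
    (fun c a b ↦ by simp [LinearMap.smul_comp, smul_sub])
    (fun a b b' ↦ by simp only [map_add, mul_add, LinearMap.comp_add]; abel)
    (fun c a b ↦ by simp [LinearMap.comp_smul, smul_sub])
  map_add' θ η := LinearMap.ext₂ fun a b ↦ by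
    simp only [LinearMap.mk₂_apply, LinearMap.add_apply, LinearMap.comp_add, LinearMap.add_comp]
    abel
  map_smul' c θ := LinearMap.ext₂ fun a b ↦ by
    simp [LinearMap.comp_smul, LinearMap.smul_comp, smul_sub]

theorem hochschildD₁_apply (x : A →ₐ[k] Module.End k V) (y : A →ₐ[k] Module.End k W)
    (θ : A →ₗ[k] V →ₗ[k] W) (a b : A) :
    hochschildD₁ x y θ a b = y a ∘ₗ θ b - θ (a * b) + θ a ∘ₗ x b := rfl

theorem hochschildD₁_comp_hochschildD₀ (x : A →ₐ[k] Module.End k V)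
    (y : A →ₐ[k] Module.End k W) : hochschildD₁ x y ∘ₗ hochschildD₀ x y = 0 := by
  refine LinearMap.ext fun φ ↦ LinearMap.ext₂ fun a b ↦ LinearMap.ext fun v ↦ ?_
  simp [hochschildD₁_apply, hochschildD₀_apply]

theorem map_mul_of_hochschildD₁_eq_zero {x : A →ₐ[k] Module.End k V}
    {y : A →ₐ[k] Module.End k W} {θ : A →ₗ[k] V →ₗ[k] W} (hθ : hochschildD₁ x y θ = 0)
    (a b : A) : θ (a * b) = y a ∘ₗ θ b + θ a ∘ₗ x b := by
  have cocycle : y a ∘ₗ θ b - θ (a * b) + θ a ∘ₗ x b = 0 :=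
    LinearMap.congr_fun₂ hθ a b
  rw [sub_add_eq_add_sub] at cocycle
  exact (sub_eq_zero.mp cocycle).symm

/-- The extension of `x` by `y` defined by a Hochschild 1-cocycle `θ`: the block upper triangular
representation on `W × V` with diagonal blocks `y` and `x`, and with `θ` above the diagonal. -/
def extensionOfCocycle (x : A →ₐ[k] Module.End k V) (y : A →ₐ[k] Module.End k W)
    (θ : A →ₗ[k] V →ₗ[k] W) (hθ : hochschildD₁ x y θ = 0) : A →ₐ[k] Module.End k (W × V) :=
  AlgHom.ofLinearMap
    { toFun a := ((y a).coprod (θ a)).prod (x a ∘ₗ LinearMap.snd k W V)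
      map_add' a b := LinearMap.ext fun z ↦ by
        ext
        · simp [add_add_add_comm]
        · simp
      map_smul' c a := LinearMap.ext fun z ↦ by simp }
    (by
      have θ_one : θ 1 = 0 := by
        simpa [Module.End.one_eq_id] using map_mul_of_hochschildD₁_eq_zero hθ 1 1
      refine LinearMap.ext fun z ↦ ?_
      simp [θ_one])
    (fun a b ↦ LinearMap.ext fun z ↦ by
      simp [map_mul_of_hochschildD₁_eq_zero hθ, add_assoc])

theorem extensionOfCocycle_apply {x : A →ₐ[k] Module.End k V} {y : A →ₐ[k] Module.End k W}
    {θ : A →ₗ[k] V →ₗ[k] W} (hθ : hochschildD₁ x y θ = 0) (a : A) (z : W × V) :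
    extensionOfCocycle x y θ hθ a z = (y a z.1 + θ a z.2, x a z.2) := rfl

namespace IsRegularFamily

variable {P : Type*} {F : Subalgebra k (P → k)} [Module.Free k V] [Module.Finite k V]
  [Module.Free k W] [Module.Finite k W] [Module.Free k A] [Module.Finite k A]
  {ρ : P → A →ₐ[k] Module.End k W}

theorem hochschildD₀ (hρ : IsRegularFamily F fun p ↦ (ρ p).toLinearMap)
    (x : A →ₐ[k] Module.End k V) : IsRegularFamily F fun p ↦ hochschildD₀ x (ρ p) :=
  of_apply fun φ ↦ of_apply fun a ↦
    ((hρ.map (LinearMap.applyₗ a)).map (LinearMap.lcomp k W φ)).sub (const _)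

theorem hochschildD₁ (hρ : IsRegularFamily F fun p ↦ (ρ p).toLinearMap)
    (x : A →ₐ[k] Module.End k V) : IsRegularFamily F fun p ↦ hochschildD₁ x (ρ p) :=
  of_apply fun θ ↦ of_apply fun a ↦ of_apply fun b ↦
    (((hρ.map (LinearMap.applyₗ a)).map (LinearMap.lcomp k W (θ b))).sub (const _)).add (const _)

end IsRegularFamily

end Representation

section Rigid

theorem SelfExtOneVanishes.congr {A X Y : Type} [Ring A] [AddCommGroup X] [Module A X]
    [AddCommGroup Y] [Module A Y] (e : X ≃ₗ[A] Y) (h : SelfExtOneVanishes A X) :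
    SelfExtOneVanishes A Y := by
  intro E _ _ f g hf hg hfg
  obtain ⟨s, hs⟩ := h E (f ∘ₗ e.toLinearMap) (e.symm.toLinearMap ∘ₗ g)
    (hf.comp e.injective) (e.symm.surjective.comp hg)
    (by rw [LinearMap.range_comp, LinearEquiv.range, Submodule.map_top, hfg, LinearEquiv.ker_comp])
  refine ⟨s ∘ₗ e.symm.toLinearMap, LinearMap.ext fun y ↦ ?_⟩
  simpa using LinearMap.congr_fun hs (e.symm y)

section Extension

variable {k : Type*} {A V : Type} [CommRing k] [Ring A] [Algebra k A] [AddCommGroup V] [Module k V]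

theorem SelfExtOneVanishes.exists_section_extensionOfCocycle {x : A →ₐ[k] Module.End k V}
    (hx : SelfExtOneVanishes A (RepresentationModule x)) {θ : A →ₗ[k] Module.End k V}
    (hθ : hochschildD₁ x x θ = 0) :
    ∃ φ : Module.End k V, ∀ a,
      φ.prod LinearMap.id ∘ₗ x a = extensionOfCocycle x x θ hθ a ∘ₗ φ.prod LinearMap.id := by
  let E := extensionOfCocycle x x θ hθ
  let inclusion : RepresentationModule x →ₗ[A] RepresentationModule E :=
    RepresentationModule.map (LinearMap.inl k V V) fun a ↦ by
      refine LinearMap.ext fun v ↦ ?_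
      simp [E, extensionOfCocycle_apply]
  let projection : RepresentationModule E →ₗ[A] RepresentationModule x :=
    RepresentationModule.map (LinearMap.snd k V V) fun _ ↦ rfl
  have exact_inclusion_projection : Function.Exact inclusion projection :=
    Function.Exact.inl_snd (R := k) (M := V) (N := V)
  obtain ⟨s, hs⟩ := hx (RepresentationModule E) inclusion projection
    (LinearMap.inl_injective (R := k) (M := V) (M₂ := V))
    (LinearMap.snd_surjective (R := k) (M := V) (M₂ := V))
    (LinearMap.exact_iff.mp exact_inclusion_projection).symm
  let σ : V →ₗ[k] V × V :=
    (RepresentationModule.of E).symm ∘ₗ s.restrictScalars k ∘ₗ (RepresentationModule.of x)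
  have σ_eq : (LinearMap.fst k V V ∘ₗ σ).prod LinearMap.id = σ :=
    LinearMap.ext fun v ↦ Prod.ext rfl (LinearMap.congr_fun hs v).symm
  refine ⟨LinearMap.fst k V V ∘ₗ σ, fun a ↦ ?_⟩
  rw [σ_eq]
  exact LinearMap.ext fun v ↦ s.map_smul a v

theorem SelfExtOneVanishes.exact_hochschildD₀_hochschildD₁ {x : A →ₐ[k] Module.End k V}
    (hx : SelfExtOneVanishes A (RepresentationModule x)) :
    Function.Exact (hochschildD₀ x x) (hochschildD₁ x x) := by
  refine fun θ ↦ ⟨fun hθ ↦ ?_, ?_⟩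
  · obtain ⟨φ, hφ⟩ := hx.exists_section_extensionOfCocycle hθ
    refine ⟨-φ, LinearMap.ext₂ fun a v ↦ ?_⟩
    have fst_eq : φ (x a v) = x a (φ v) + θ a v :=
      congrArg Prod.fst (LinearMap.congr_fun (hφ a) v)
    simp [hochschildD₀_apply, fst_eq]
  · rintro ⟨φ, rfl⟩
    exact LinearMap.congr_fun (hochschildD₁_comp_hochschildD₀ x x) φ

end Extension

theorem exists_linearEquiv_representationModule {k A X : Type} [Field k] [Ring A] [Algebra k A]
    [AddCommGroup X] [Module A X] {n : ℕ} (h : IsKDimEq k A X n) :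
    ∃ ρ : A →ₐ[k] Module.End k (Fin n → k), Nonempty (X ≃ₗ[A] RepresentationModule ρ) := by
  let : Module k X := Module.compHom X (algebraMap k A)
  obtain ⟨hfinite, hrank⟩ := h
  have : Module.Finite k X := hfinite
  have : IsScalarTower k A X := .of_algebraMap_smul fun _ _ ↦ rfl
  let e : X ≃ₗ[k] (Fin n → k) := LinearEquiv.ofFinrankEq _ _ (by simpa using hrank)
  let ρ : A →ₐ[k] Module.End k (Fin n → k) :=
    (e.conjAlgEquiv k).toAlgHom.comp (Algebra.lsmul k k X)
  have equivariant (a : A) (v : X) :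
      e.trans (RepresentationModule.of ρ) (a • v) = a • e.trans (RepresentationModule.of ρ) v := by
    simp [ρ, RepresentationModule.smul_of]
  exact ⟨ρ, ⟨{ e.trans (RepresentationModule.of ρ) with map_smul' := equivariant }⟩⟩

variable {k : Type*} {A V : Type} [Field k] [Ring A] [Algebra k A] [FiniteDimensional k A]
  [AddCommGroup V] [Module k V] [FiniteDimensional k V]

theorem SelfExtOneVanishes.exists_mem_ne_zero_forall_linearEquiv {P : Type*}
    {F : Subalgebra k (P → k)} {ρ : P → A →ₐ[k] Module.End k V}
    (hρ : IsRegularFamily F fun p ↦ (ρ p).toLinearMap) {q : P}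
    (hq : SelfExtOneVanishes A (RepresentationModule (ρ q))) :
    ∃ f ∈ F, f q ≠ 0 ∧ ∀ p, f p ≠ 0 →
      Nonempty (RepresentationModule (ρ q) ≃ₗ[A] RepresentationModule (ρ p)) := by
  have one_mem_ker : hochschildD₀ (ρ q) (ρ q) 1 = 0 := by
    ext
    simp [hochschildD₀_apply]
  obtain ⟨ψ, ψ_regular, ψ_ker, ψ_q⟩ := (hρ.hochschildD₀ (ρ q)).exists_mem_ker_of_exact
    (U := A →ₗ[k] A →ₗ[k] V →ₗ[k] V) (hρ.hochschildD₁ (ρ q))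
    (fun p ↦ hochschildD₁_comp_hochschildD₀ (ρ q) (ρ p))
    (q := q) hq.exact_hochschildD₀_hochschildD₁ one_mem_ker
  refine ⟨fun p ↦ LinearMap.det (ψ p), ψ_regular.det_mem, by simp [ψ_q], fun p hp ↦ ?_⟩
  have intertwine (a : A) : ψ p ∘ₗ ρ q a = ρ p a ∘ₗ ψ p :=
    (sub_eq_zero.mp (LinearMap.congr_fun (ψ_ker p) a)).symm
  have bijective : Function.Bijective (ψ p) :=
    (Module.End.isUnit_iff _).mp ((LinearMap.isUnit_iff_isUnit_det _).mpr hp.isUnit)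
  exact ⟨.ofBijective (RepresentationModule.map (ψ p) intertwine) bijective⟩

variable (k A V) in
theorem exists_finset_representation_of_rigid :
    ∃ s : Finset (A →ₐ[k] Module.End k V),
      ∀ x : A →ₐ[k] Module.End k V, SelfExtOneVanishes A (RepresentationModule x) →
        ∃ y ∈ s, Nonempty (RepresentationModule x ≃ₗ[A] RepresentationModule y) := by
  classical
  obtain ⟨F, hFG, hF⟩ := exists_fg_subalgebra_isRegularFamily (k := k)
    fun x : A →ₐ[k] Module.End k V ↦ x.toLinearMap
  have : Algebra.FiniteType k F := F.fg_iff_finiteType.mp hFG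
  have : IsNoetherianRing F := Algebra.FiniteType.isNoetherianRing k F
  let Rigid := {x : A →ₐ[k] Module.End k V // SelfExtOneVanishes A (RepresentationModule x)}
  choose f f_mem f_self f_equiv using fun x : Rigid ↦
    x.2.exists_mem_ne_zero_forall_linearEquiv hF
  obtain ⟨s, hs⟩ := exists_finset_forall_exists_notMem fun x ↦ (⟨f x, f_mem x⟩ : F)
  refine ⟨s.image Subtype.val, fun x hx ↦ ?_⟩
  let evalAtX : F →+* k := (Pi.evalRingHom (fun _ ↦ k) x).comp F.val.toRingHom
  obtain ⟨y, hy, hyx⟩ := hs (RingHom.ker evalAtX) ⟨x, hx⟩ (f_self ⟨x, hx⟩)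
  exact ⟨y, Finset.mem_image_of_mem _ hy, (f_equiv y x hyx).map .symm⟩

end Rigid

/-- Let `A` be a finite-dimensional algebra over a field `k` and `n` a
positive integer. There are only finitely many isomorphism classes of `A`-modules `X` with
`dim_k X = n` and `Ext¹_A(X, X) = 0`. -/
theorem finitely_many_rigid_modules_of_dim (k A : Type) [Field k] [Ring A] [Algebra k A]
    [FiniteDimensional k A] (n : ℕ) (hn : 0 < n) :
    ∃ (t : ℕ) (Xs : Fin t → ModuleCat A),
      ∀ (X : Type) [AddCommGroup X] [Module A X],
        IsKDimEq k A X n → SelfExtOneVanishes A X →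
        ∃ i : Fin t, Nonempty (X ≃ₗ[A] Xs i) := by
  obtain ⟨s, hs⟩ := exists_finset_representation_of_rigid k A (Fin n → k)
  refine ⟨s.card, fun i ↦ ModuleCat.of A (ULift (RepresentationModule (s.equivFin.symm i).1)),
    fun X _ _ hdim hrigid ↦ ?_⟩
  obtain ⟨x, ⟨e⟩⟩ := exists_linearEquiv_representationModule hdim
  obtain ⟨y, hy, ⟨e'⟩⟩ := hs x (hrigid.congr e)
  obtain ⟨i, rfl⟩ : ∃ i, (s.equivFin.symm i : A →ₐ[k] Module.End k (Fin n → k)) = y :=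
    ⟨s.equivFin ⟨y, hy⟩, by simp⟩
  exact ⟨i, ⟨(e.trans e').trans ULift.moduleEquiv.symm⟩⟩
end
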